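/- arXiv:1502.03811 — 3 statements merged into one kernel-verified Lean document; each statement's English description precedes it below -/
import Mathlib

section
/- Let F₂ be the free group on two generators a and b. There exists a family (ρ_t)_{t ∈ [0,1]} of group homomorphisms ρ_t : F₂ → SL(2,ℝ) × SL(2,ℝ) with the following properties. (1) Continuity in t: for every γ ∈ F₂, the map t ↦ ρ_t(γ) is continuous on [0,1]. (2) ρ₀ is a quasi-isometric embedding: there exist constants c ≥ 1 and C ≥ 0 such that for every γ ∈ F₂, c⁻¹·ℓ(γ) − C ≤ μ((ρ₀(γ))₁) + μ((ρ₀(γ))₂) ≤ c·ℓ(γ) + C, where (ρ₀(γ))₁ and (ρ₀(γ))₂ denote the two components of ρ₀(γ). (3) For every irrational t ∈ [0,1], the image ρ_t(F₂) is dense in SL(2,ℝ) × SL(2,ℝ) (for the product of the matrix topologies). -/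
open Matrix

/-- The operator norm of a `2 × 2` real matrix acting on Euclidean `ℝ²`. -/
noncomputable def opNorm2 (M : Matrix (Fin 2) (Fin 2) ℝ) : ℝ :=
  ‖LinearMap.toContinuousLinearMap (Matrix.toEuclideanLin M)‖

/-- The Cartan projection `μ(g) = 2 log ‖g‖` of `SL(2,ℝ)`, identifying the closed positive
Weyl chamber with `ℝ≥0`. -/
noncomputable def mu2 (g : Matrix.SpecialLinearGroup (Fin 2) ℝ) : ℝ :=
  2 * Real.log (opNorm2 (g : Matrix (Fin 2) (Fin 2) ℝ))

/-- The word length of an element of the free group on two generators. -/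
def wordLength (γ : FreeGroup (Fin 2)) : ℕ :=
  (FreeGroup.toWord γ).length

section PF

open Real

local notation "SLR" => Matrix.SpecialLinearGroup (Fin 2) ℝ

noncomputable def rotM (φ : ℝ) : SLR :=
  ⟨!![cos φ, -sin φ; sin φ, cos φ], by
    rw [Matrix.det_fin_two_of]; nlinarith [sin_sq_add_cos_sq φ]⟩

noncomputable def diaM (x : ℝ) : SLR :=
  ⟨!![exp x, 0; 0, exp (-x)], by
    rw [Matrix.det_fin_two_of, ← exp_add]; simp⟩

noncomputable def uppM (x : ℝ) : SLR := ⟨!![1, x; 0, 1], by simp⟩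
noncomputable def lowM (x : ℝ) : SLR := ⟨!![1, 0; x, 1], by simp⟩

noncomputable def ellM (θ : ℝ) : SLR :=
  ⟨!![cos θ + (2 - sin θ ^ 2 / 8), -(2 + sin θ ^ 2 / 8);
      2 + sin θ ^ 2 / 8, cos θ - (2 - sin θ ^ 2 / 8)], by
    rw [Matrix.det_fin_two_of]; nlinarith [sin_sq_add_cos_sq θ]⟩

theorem sl_ext {g h : SLR} (h00 : g.1 0 0 = h.1 0 0) (h01 : g.1 0 1 = h.1 0 1)
    (h10 : g.1 1 0 = h.1 1 0) (h11 : g.1 1 1 = h.1 1 1) : g = h := by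
  apply Subtype.ext
  ext i j
  fin_cases i <;> fin_cases j <;> assumption

theorem sl_mul (g h : SLR) (i j : Fin 2) :
    (g * h).1 i j = g.1 i 0 * h.1 0 j + g.1 i 1 * h.1 1 j := by
  change (g.1 * h.1) i j = _
  rw [Matrix.mul_apply, Fin.sum_univ_two]

theorem sl_inv (g : SLR) : (g⁻¹).1 = !![g.1 1 1, -g.1 0 1; -g.1 1 0, g.1 0 0] := by
  rw [← Matrix.adjugate_fin_two]
  exact Matrix.SpecialLinearGroup.coe_inv g

theorem sl_det (g : SLR) : g.1 0 0 * g.1 1 1 - g.1 0 1 * g.1 1 0 = 1 := by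
  rw [← Matrix.det_fin_two]; exact g.2

theorem rotM_add (x y : ℝ) : rotM (x + y) = rotM x * rotM y := by
  apply sl_ext <;> rw [sl_mul] <;> simp [rotM, cos_add, sin_add] <;> ring

theorem rotM_zero : rotM 0 = 1 := by
  apply sl_ext <;> simp [rotM]

theorem rotM_neg (x : ℝ) : rotM (-x) = (rotM x)⁻¹ := by
  rw [eq_inv_iff_mul_eq_one, ← rotM_add]; simp [rotM_zero]

theorem diaM_add (x y : ℝ) : diaM (x + y) = diaM x * diaM y := by
  apply sl_ext <;> rw [sl_mul] <;> simp [diaM, exp_add] <;> ring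

theorem diaM_zero : diaM 0 = 1 := by
  apply sl_ext <;> simp [diaM]

theorem diaM_neg (x : ℝ) : diaM (-x) = (diaM x)⁻¹ := by
  rw [eq_inv_iff_mul_eq_one, ← diaM_add]; simp [diaM_zero]

theorem diaM_nat (n : ℕ) (x : ℝ) : diaM (n * x) = diaM x ^ n := by
  induction n with
  | zero => simp [diaM_zero]
  | succ n ih => rw [pow_succ, ← ih, ← diaM_add]; push_cast; ring_nf

theorem continuous_sl {X : Type*} [TopologicalSpace X] {f : X → SLR}
    (h : ∀ i j, Continuous fun x => (f x).1 i j) : Continuous f := by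
  exact continuous_induced_rng.mpr (continuous_matrix h)

theorem continuous_rotM : Continuous rotM := by
  apply continuous_sl
  intro i j
  fin_cases i <;> fin_cases j <;> simp [rotM] <;> fun_prop

theorem continuous_ellM : Continuous ellM := by
  apply continuous_sl
  intro i j
  fin_cases i <;> fin_cases j <;> simp [ellM] <;> fun_prop

/-- Cartan decomposition. -/
theorem kak (g : SLR) : ∃ φ ψ x, g = rotM φ * diaM x * rotM ψ := by
  -- rotate so that columns are orthogonal
  have key : ∃ φ : ℝ, (g * rotM φ).1 0 0 * (g * rotM φ).1 0 1
      + (g * rotM φ).1 1 0 * (g * rotM φ).1 1 1 = 0 := by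
    set h : ℝ → ℝ := fun φ => (g * rotM φ).1 0 0 * (g * rotM φ).1 0 1
      + (g * rotM φ).1 1 0 * (g * rotM φ).1 1 1 with hh
    have hcont : Continuous h := by
      simp only [hh, sl_mul]
      simp [rotM]
      fun_prop
    have h2 : h (π / 2) = - h 0 := by
      simp only [hh, sl_mul]
      simp [rotM]
      ring
    rcases le_total (h 0) 0 with h0 | h0
    · have := intermediate_value_Icc (a := 0) (b := π / 2) (by positivity) hcont.continuousOn
      obtain ⟨φ, -, hφ⟩ := this (show (0:ℝ) ∈ _ from ⟨h0, by linarith⟩)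
      exact ⟨φ, hφ⟩
    · have := intermediate_value_Icc' (a := 0) (b := π / 2) (by positivity) hcont.continuousOn
      obtain ⟨φ, -, hφ⟩ := this (show (0:ℝ) ∈ _ from ⟨by linarith, h0⟩)
      exact ⟨φ, hφ⟩
  obtain ⟨φ, hφ⟩ := key
  generalize hk : g * rotM φ = k at hφ
  have hdet := sl_det k
  generalize ha' : k.1 0 0 = a at hφ hdet
  generalize hb' : k.1 0 1 = b at hφ hdet
  generalize hc' : k.1 1 0 = c at hφ hdet
  generalize hd' : k.1 1 1 = d at hφ hdet
  -- polar form of (a, c)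
  set z : ℂ := ⟨a, c⟩ with hz
  have hz0 : z ≠ 0 := by
    intro h0
    have h1 : a = 0 := by simpa [hz] using congrArg Complex.re h0
    have h2 : c = 0 := by simpa [hz] using congrArg Complex.im h0
    rw [h1, h2] at hdet; simp at hdet
  have hr : 0 < ‖z‖ := norm_pos_iff.mpr hz0
  have ha : a = ‖z‖ * cos z.arg := by rw [Complex.norm_mul_cos_arg]
  have hc : c = ‖z‖ * sin z.arg := by rw [Complex.norm_mul_sin_arg]
  have hsq : a ^ 2 + c ^ 2 = ‖z‖ ^ 2 := by
    rw [ha, hc]; nlinarith [sin_sq_add_cos_sq z.arg]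
  have hb : b * ‖z‖ ^ 2 = - c := by
    rw [← hsq]; linear_combination a * hφ - c * hdet
  have hd : d * ‖z‖ ^ 2 = a := by
    rw [← hsq]; linear_combination c * hφ + a * hdet
  refine ⟨z.arg, -φ, log ‖z‖, ?_⟩
  have : k = rotM z.arg * diaM (log ‖z‖) := by
    have e1 : exp (log ‖z‖) = ‖z‖ := exp_log hr
    have e2 : exp (-log ‖z‖) = ‖z‖⁻¹ := by rw [exp_neg, e1]
    apply sl_ext <;> rw [sl_mul] <;> simp [rotM, diaM, e1, e2, ha', hb', hc', hd']
    · rw [ha]; ring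
    · have : b = -c / ‖z‖ ^ 2 := by field_simp; linarith
      rw [this, hc]; field_simp
    · rw [hc]; ring
    · have : d = a / ‖z‖ ^ 2 := by field_simp; linarith
      rw [this, ha]; field_simp
  rw [← this, rotM_neg, ← hk]; group

/-- squared Frobenius norm -/
noncomputable def frob (g : SLR) : ℝ :=
  g.1 0 0 ^ 2 + g.1 0 1 ^ 2 + g.1 1 0 ^ 2 + g.1 1 1 ^ 2

theorem frob_rot_mul (φ : ℝ) (g : SLR) : frob (rotM φ * g) = frob g := by
  simp only [frob, sl_mul]
  simp [rotM]
  linear_combination (g.1 0 0 ^ 2 + g.1 0 1 ^ 2 + g.1 1 0 ^ 2 + g.1 1 1 ^ 2) * sin_sq_add_cos_sq φ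

theorem frob_mul_rot (φ : ℝ) (g : SLR) : frob (g * rotM φ) = frob g := by
  simp only [frob, sl_mul]
  simp [rotM]
  linear_combination (g.1 0 0 ^ 2 + g.1 0 1 ^ 2 + g.1 1 0 ^ 2 + g.1 1 1 ^ 2) * sin_sq_add_cos_sq φ

theorem frob_dia (x : ℝ) : frob (diaM x) = 2 * cosh (2 * x) := by
  have e1 : exp (2 * x) = exp x ^ 2 := by rw [← exp_nat_mul]; norm_num
  have e2 : exp (-(2 * x)) = exp (-x) ^ 2 := by rw [← exp_nat_mul]; norm_num
  rw [cosh_eq, e1, e2]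
  simp [frob, diaM]
  ring

theorem eq_top_of_rot (Γ : Subgroup SLR) (hrot : ∀ φ, rotM φ ∈ Γ) (g : SLR) (hg : g ∈ Γ)
    (htr : 2 < |g.1 0 0 + g.1 1 1|) : Γ = ⊤ := by
  obtain ⟨φ, ψ, x, hx⟩ := kak g
  have strip : ∀ φ y ψ, rotM φ * diaM y * rotM ψ ∈ Γ → diaM y ∈ Γ := by
    intro φ y ψ h
    have := Γ.mul_mem (Γ.mul_mem (Γ.inv_mem (hrot φ)) h) (Γ.inv_mem (hrot ψ))
    convert this using 1
    group
  have hxΓ : diaM x ∈ Γ := strip φ x ψ (hx ▸ hg)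
  have hx0 : x ≠ 0 := by
    rintro rfl
    rw [diaM_zero, mul_one, ← rotM_add] at hx
    rw [hx] at htr
    simp [rotM] at htr
    have := abs_cos_le_one (φ + ψ)
    rw [← two_mul, abs_mul, abs_two] at htr
    linarith
  have small : ∀ y, |y| ≤ 2 * |x| → diaM y ∈ Γ := by
    intro y hy
    have h1 : (1:ℝ) ≤ cosh (2 * y) := one_le_cosh _
    have h2 : cosh (2 * y) ≤ cosh (4 * x) := by
      rw [cosh_le_cosh, abs_mul, abs_mul]
      simp; linarith
    have h3 : 1 < cosh (4 * x) := by rw [one_lt_cosh]; simpa using hx0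
    set v := (cosh (2 * y) - 1) / (cosh (4 * x) - 1) with hv
    have hv0 : 0 ≤ v := div_nonneg (by linarith) (by linarith)
    have hv1 : v ≤ 1 := by rw [hv, div_le_one (by linarith)]; linarith
    have hc : cos (arccos (√v)) ^ 2 = v := by
      rw [cos_arccos (by linarith [sqrt_nonneg v]) (by rwa [sqrt_le_one]), sq_sqrt hv0]
    set t := arccos (√v)
    have hmem : diaM x * rotM t * diaM x ∈ Γ := Γ.mul_mem (Γ.mul_mem hxΓ (hrot t)) hxΓ
    have hfr : frob (diaM x * rotM t * diaM x) = 2 * cosh (2 * y) := by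
      have hs : sin t ^ 2 = 1 - v := by rw [sin_sq, hc]
      have e1 : exp (4 * x) = exp x ^ 4 := by rw [← exp_nat_mul]; norm_num
      have e2 : exp (-(4 * x)) = exp (-x) ^ 4 := by rw [← exp_nat_mul]; norm_num
      have e3 : exp x * exp (-x) = 1 := by rw [← exp_add]; simp
      have : frob (diaM x * rotM t * diaM x) = cos t ^ 2 * (2 * cosh (4 * x)) + 2 * sin t ^ 2 := by
        rw [cosh_eq, e1, e2]
        simp only [frob, sl_mul]
        simp [rotM, diaM]
        linear_combination (2 * sin t ^ 2) * (exp x * exp (-x) + 1) * e3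
      rw [this, hc, hs]
      have : v * (cosh (4 * x) - 1) = cosh (2 * y) - 1 := by
        rw [hv]; field_simp [(by linarith : cosh (4 * x) - 1 ≠ 0)]
      linarith
    obtain ⟨φ', ψ', y', hy'⟩ := kak (diaM x * rotM t * diaM x)
    have hy'Γ := strip φ' y' ψ' (hy' ▸ hmem)
    rw [hy', frob_mul_rot, frob_rot_mul, frob_dia] at hfr
    have : |2 * y'| = |2 * y| := by
      apply le_antisymm <;> rw [← cosh_le_cosh] <;> linarith
    rcases abs_eq_abs.mp this with h | h
    · have : y' = y := by linarith
      exact this ▸ hy'Γ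
    · have : y = -y' := by linarith
      rw [this, diaM_neg]; exact Γ.inv_mem hy'Γ
  have all : ∀ y, diaM y ∈ Γ := by
    intro y
    obtain ⟨n, hn⟩ := exists_nat_gt (|y| / (2 * |x|))
    have hxp : 0 < |x| := abs_pos.mpr hx0
    have hn0 : (0:ℝ) < n := lt_of_le_of_lt (by positivity) hn
    have := small (y / n) (by
      rw [abs_div, Nat.abs_cast, div_le_iff₀ hn0]
      rw [div_lt_iff₀ (by positivity)] at hn
      linarith)
    have h2 := Γ.pow_mem this n
    rw [← diaM_nat] at h2
    convert h2 using 2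
    field_simp
  rw [eq_top_iff]
  intro h _
  obtain ⟨φ, ψ, x, rfl⟩ := kak h
  exact Γ.mul_mem (Γ.mul_mem (hrot _) (all _)) (hrot _)

theorem conj_rot (M : SLR) (ψ : ℝ) (htr : M.1 0 0 + M.1 1 1 = 2 * cos ψ) (hs : sin ψ ≠ 0) :
    ∃ (P : SLR) (ψ' : ℝ), (ψ' = ψ ∨ ψ' = -ψ) ∧ M = P * rotM ψ' * P⁻¹ := by
  have hdet := sl_det M
  have hc : M.1 1 0 ≠ 0 := by
    intro h0
    rw [h0] at hdet
    have h1 := sin_sq_add_cos_sq ψ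
    have h2 : 0 < sin ψ ^ 2 := by positivity
    have h3 : (M.1 0 0 + M.1 1 1) ^ 2 = 4 * cos ψ ^ 2 := by rw [htr]; ring
    nlinarith [sq_nonneg (M.1 0 0 - M.1 1 1)]
  obtain ⟨ψ', hψ', hpos⟩ : ∃ ψ', (ψ' = ψ ∨ ψ' = -ψ) ∧ 0 < M.1 1 0 / sin ψ' := by
    rcases lt_or_gt_of_ne (div_ne_zero hc hs) with h | h
    · exact ⟨-ψ, Or.inr rfl, by rw [sin_neg, div_neg]; linarith⟩
    · exact ⟨ψ, Or.inl rfl, h⟩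
  have htr' : M.1 0 0 + M.1 1 1 = 2 * cos ψ' := by
    rcases hψ' with rfl | rfl <;> simp [htr]
  have hs' : sin ψ' ≠ 0 := by
    rcases hψ' with rfl | rfl <;> simp [hs]
  set r := √(M.1 1 0 / sin ψ') with hr
  have hr0 : 0 < r := sqrt_pos.mpr hpos
  have hr2 : r ^ 2 = M.1 1 0 / sin ψ' := sq_sqrt hpos.le
  have hr3 : r ^ 2 * sin ψ' = M.1 1 0 := by rw [hr2]; field_simp
  set e := (M.1 0 0 - M.1 1 1) / (2 * sin ψ') with he
  have he' : e * sin ψ' = (M.1 0 0 - M.1 1 1) / 2 := by rw [he]; field_simp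
  have h1 := sin_sq_add_cos_sq ψ'
  obtain ⟨P, hP⟩ : ∃ P : SLR, P.1 = !![1 / r, e / r; 0, r] :=
    ⟨⟨!![1 / r, e / r; 0, r], by rw [Matrix.det_fin_two_of]; field_simp; simp⟩, rfl⟩
  refine ⟨P, ψ', hψ', ?_⟩
  rw [eq_mul_inv_iff_mul_eq]
  have m00 : M.1 0 0 = cos ψ' + e * sin ψ' := by linarith
  have m11 : M.1 1 1 = cos ψ' - e * sin ψ' := by linarith
  have m01 : M.1 0 1 * r ^ 2 = - sin ψ' - e ^ 2 * sin ψ' := by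
    rw [m00, m11, ← hr3] at hdet
    apply mul_right_cancel₀ hs'
    linear_combination -hdet + h1
  apply sl_ext <;> simp only [sl_mul, hP] <;> simp [rotM]
  · rw [m00]; field_simp
  · rw [m00]; field_simp; linear_combination m01
  · rw [← hr3]; field_simp
  · rw [m11, ← hr3]; field_simp; ring

theorem rot_mem_of_irr (Γ : Subgroup SLR) (hcl : IsClosed (Γ : Set SLR)) (ψ : ℝ)
    (hψ : Irrational (ψ / π)) (h : rotM ψ ∈ Γ) (φ : ℝ) : rotM φ ∈ Γ := by
  let S : AddSubgroup ℝ :=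
    { carrier := {x | rotM x ∈ Γ}
      add_mem' := by
        intro x y hx hy
        change rotM (x + y) ∈ Γ
        rw [rotM_add]; exact Γ.mul_mem hx hy
      zero_mem' := by change rotM 0 ∈ Γ; rw [rotM_zero]; exact Γ.one_mem
      neg_mem' := by
        intro x hx
        change rotM (-x) ∈ Γ
        rw [rotM_neg]; exact Γ.inv_mem hx }
  have hS : IsClosed (S : Set ℝ) := hcl.preimage continuous_rotM
  have h2 : (2 * π) ∈ S := by
    change rotM (2 * π) ∈ Γ
    have : rotM (2 * π) = 1 := by apply sl_ext <;> simp [rotM]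
    rw [this]; exact Γ.one_mem
  have hirr : Irrational (ψ / (2 * π)) := by
    have : ψ / (2 * π) = (ψ / π) / (2 : ℕ) := by
      have := pi_pos
      field_simp; push_cast; ring
    rw [this]
    exact hψ.div_natCast (by norm_num)
  have hd := dense_addSubgroupClosure_pair_iff.mpr hirr
  have hle : AddSubgroup.closure {ψ, 2 * π} ≤ S := by
    rw [AddSubgroup.closure_le]
    intro x hx
    rcases hx with rfl | rfl
    · exact h
    · exact h2
  have : φ ∈ closure (S : Set ℝ) := closure_mono hle (hd φ)
  rw [hS.closure_eq] at this
  exact this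

theorem irr_sin_ne {ψ : ℝ} (hψ : Irrational (ψ / π)) : sin ψ ≠ 0 := by
  intro h0
  obtain ⟨n, hn⟩ := sin_eq_zero_iff.mp h0
  apply hψ
  refine ⟨n, ?_⟩
  rw [← hn]; have := pi_pos; field_simp; simp

theorem eq_top_of_irr (Γ : Subgroup SLR) (hcl : IsClosed (Γ : Set SLR)) (M : SLR) (hM : M ∈ Γ)
    (ψ : ℝ) (htr : M.1 0 0 + M.1 1 1 = 2 * cos ψ) (hψ : Irrational (ψ / π))
    (g : SLR) (hg : g ∈ Γ) (hgt : 2 < |g.1 0 0 + g.1 1 1|) : Γ = ⊤ := by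
  obtain ⟨P, ψ', hψ', hMP⟩ := conj_rot M ψ htr (irr_sin_ne hψ)
  let Γ' : Subgroup SLR := Γ.comap (MulAut.conj P).toMonoidHom
  have hmem : ∀ x, x ∈ Γ' ↔ P * x * P⁻¹ ∈ Γ := by
    intro x; simp [Γ']
  have hcl' : IsClosed (Γ' : Set SLR) := by
    have : (Γ' : Set SLR) = (fun x => P * x * P⁻¹) ⁻¹' (Γ : Set SLR) := by
      ext x; exact hmem x
    rw [this]
    exact hcl.preimage (by fun_prop)
  have hirr : Irrational (ψ' / π) := by
    rcases hψ' with rfl | rfl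
    · exact hψ
    · rw [neg_div]; exact hψ.neg
  have hrot := rot_mem_of_irr Γ' hcl' ψ' hirr (by rw [hmem, ← hMP]; exact hM)
  have htop := eq_top_of_rot Γ' hrot (P⁻¹ * g * P) (by rw [hmem]; convert hg using 1; group) (by
    convert hgt using 2
    have := sl_det P
    simp only [sl_mul, sl_inv]
    simp
    linear_combination (g.1 0 0 + g.1 1 1) * this)
  rw [eq_top_iff]
  intro x _
  have : P⁻¹ * x * P ∈ Γ' := by rw [htop]; trivial
  rw [hmem] at this
  convert this using 1; group

theorem normal_eq_top (N : Subgroup SLR) (hn : N.Normal) (x : ℝ) (hx : x ≠ 0)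
    (h : diaM x ∈ N) : N = ⊤ := by
  have hup : ∀ y, uppM y ∈ N := by
    intro y
    have hne : 1 - exp (2 * x) ≠ 0 := by
      rw [sub_ne_zero]; intro h1
      have := (exp_eq_one_iff _).mp h1.symm
      exact hx (by linarith)
    have h1 := N.mul_mem (hn.conj_mem _ h (uppM (y / (1 - exp (2 * x))))) (N.inv_mem h)
    convert h1 using 1
    have e1 : exp (2 * x) = exp x ^ 2 := by rw [← exp_nat_mul]; norm_num
    have e3 : exp x * exp (-x) = 1 := by rw [← exp_add]; simp
    rw [e1] at hne ⊢
    apply sl_ext <;> simp only [sl_mul, sl_inv] <;> simp [uppM, diaM, e3, mul_comm (exp (-x))]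
    field_simp
    linear_combination (-y) * e3
  have hlo : ∀ y, lowM y ∈ N := by
    intro y
    have h1 := hn.conj_mem _ (hup (-y)) (rotM (π / 2))
    convert h1 using 1
    apply sl_ext <;> simp only [sl_mul, sl_inv] <;> simp [uppM, lowM, rotM]
  have hmain : ∀ g : SLR, g.1 1 0 ≠ 0 → g ∈ N := by
    intro g hg
    have : g = uppM ((g.1 0 0 - 1) / g.1 1 0) * lowM (g.1 1 0) * uppM ((g.1 1 1 - 1) / g.1 1 0) := by
      have := sl_det g
      apply sl_ext <;> simp only [sl_mul] <;> simp [uppM, lowM] <;> field_simp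
      · ring
      · linear_combination -this
      · ring
    rw [this]
    exact N.mul_mem (N.mul_mem (hup _) (hlo _)) (hup _)
  rw [eq_top_iff]
  intro g _
  by_cases hg : g.1 1 0 = 0
  · have hd := sl_det g
    have h1 := hmain (lowM 1 * g) (by
      simp only [sl_mul]
      simp [lowM, hg]
      intro h0; rw [h0, hg] at hd; simp at hd)
    have := N.mul_mem (N.inv_mem (hlo 1)) h1
    rwa [inv_mul_cancel_left] at this
  · exact hmain g hg



theorem ellM_pow (θ : ℝ) (hs : sin θ ≠ 0) (k : ℕ) : (ellM θ ^ k).1 =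
    !![cos (k * θ) + sin (k * θ) / sin θ * (2 - sin θ ^ 2 / 8),
        -(sin (k * θ) / sin θ * (2 + sin θ ^ 2 / 8));
      sin (k * θ) / sin θ * (2 + sin θ ^ 2 / 8),
        cos (k * θ) - sin (k * θ) / sin θ * (2 - sin θ ^ 2 / 8)] := by
  induction k with
  | zero => ext i j; fin_cases i <;> fin_cases j <;> simp
  | succ k ih =>
    have e1 : cos ((k + 1 : ℕ) * θ) = cos (k * θ) * cos θ - sin (k * θ) * sin θ := by
      push_cast; rw [add_mul, one_mul, cos_add]
    have e2 : sin ((k + 1 : ℕ) * θ) = sin (k * θ) * cos θ + cos (k * θ) * sin θ := by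
      push_cast; rw [add_mul, one_mul, sin_add]
    rw [e1, e2]
    generalize cos (k * θ) = c at *
    generalize sin (k * θ) = d at *
    have h1 := sin_sq_add_cos_sq θ
    rw [pow_succ]
    ext i j
    rw [sl_mul, ih]
    fin_cases i <;> fin_cases j <;> simp [ellM] <;> field_simp <;> ring

theorem alg_rat_mul_pi (q : ℚ) : IsAlgebraic ℚ (cos (q * π)) ∧ IsAlgebraic ℚ (sin (q * π)) :=
  ⟨(isAlgebraic_cos_rat_mul_pi q).extendScalars (algebraMap ℤ ℚ).injective_int,
    (isAlgebraic_sin_rat_mul_pi q).extendScalars (algebraMap ℤ ℚ).injective_int⟩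

theorem alg_of_lin {p r f l m : ℝ} (hp : IsAlgebraic ℚ p) (hr : IsAlgebraic ℚ r)
    (hf : IsAlgebraic ℚ f) (hlm : l * m = 1) (h : p * l + r * m = f) (hne : p ≠ 0 ∨ r ≠ 0) :
    IsAlgebraic ℚ l := by
  have hl : l ≠ 0 := left_ne_zero_of_mul_eq_one hlm
  have h4 : IsAlgebraic ℚ (4 : ℝ) := by
    have := isAlgebraic_algebraMap (R := ℚ) (A := ℝ) (4 : ℚ)
    simpa using this
  have h2 : IsAlgebraic ℚ (2 : ℝ) := by
    have := isAlgebraic_algebraMap (R := ℚ) (A := ℝ) (2 : ℚ)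
    simpa using this
  have heq : p * l ^ 2 - f * l + r = 0 := by
    linear_combination l * h - r * hlm
  by_cases hp0 : p = 0
  · have hr0 : r ≠ 0 := by tauto
    have hfl : f * l = r := by rw [hp0] at heq; linarith
    have hf0 : f ≠ 0 := by rintro rfl; apply hr0; rw [← hfl]; ring
    have : l = r * f⁻¹ := by field_simp; linarith
    rw [this]; exact hr.mul hf.inv
  · have hsq : (2 * p * l - f) ^ 2 = f * f - 4 * (p * r) := by
      linear_combination 4 * p * heq
    have h1 : IsAlgebraic ℚ (2 * p * l - f) := by
      apply IsAlgebraic.of_pow (n := 2) (by norm_num)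
      rw [hsq]
      exact (hf.mul hf).sub (h4.mul (hp.mul hr))
    have : l = ((2 * p * l - f) + f) * (2 * p)⁻¹ := by field_simp; ring
    rw [this]
    exact (h1.add hf).mul (h2.mul hp).inv

theorem exists_ell_word (s : ℝ) (hs9 : 9 < exp s) (hs10 : exp s < 10)
    (htr : ¬ IsAlgebraic ℚ (exp s)) (n : ℕ) (hn : 9 ≤ n) (θ : ℝ)
    (hθ : θ = 2 * π * 100 / (100 * n + 1)) :
    sin θ ≠ 0 ∧ ellM θ ^ (100 * n + 1) = 1 ∧
    ∃ (k : ℕ) (ψ : ℝ), (ellM θ ^ k * diaM s).1 0 0 + (ellM θ ^ k * diaM s).1 1 1 = 2 * cos ψ ∧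
      Irrational (ψ / π) := by
  have hpi := pi_pos
  have hn' : (9:ℝ) ≤ n := by exact_mod_cast hn
  have hq0 : (0:ℝ) < 100 * n + 1 := by positivity
  have hθ0 : 0 < θ := by rw [hθ]; positivity
  have hθ1 : θ < 1 := by
    rw [hθ, div_lt_one hq0]; nlinarith [pi_lt_d2]
  have hsin : θ / 2 ≤ sin θ := by
    have := mul_le_sin hθ0.le (by nlinarith [pi_gt_three])
    refine le_trans ?_ this
    have : 1 / 2 ≤ 2 / π := by rw [div_le_div_iff₀ (by norm_num) hpi]; linarith [pi_lt_d2]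
    nlinarith
  have hsin0 : 0 < sin θ := by linarith
  refine ⟨hsin0.ne', ?_, ?_⟩
  · have hqt : ((100 * n + 1 : ℕ) : ℝ) * θ = (100 : ℕ) * (2 * π) := by
      rw [hθ]; push_cast; field_simp
    have hc : cos (((100 * n + 1 : ℕ) : ℝ) * θ) = 1 := by
      rw [hqt]; exact cos_nat_mul_two_pi 100
    have hss : sin (((100 * n + 1 : ℕ) : ℝ) * θ) = 0 := by
      rw [hqt, show ((100:ℕ):ℝ) * (2 * π) = ((200:ℕ):ℝ) * π by push_cast; ring]
      exact sin_nat_mul_pi 200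
    apply Subtype.ext
    rw [ellM_pow θ hsin0.ne', hc, hss]
    ext i j; fin_cases i <;> fin_cases j <;> simp
  set δ : ℝ := 2 * π / (100 * n + 1) with hδ
  have hδθ : θ = 100 * δ := by rw [hθ, hδ]; ring
  have hδ0 : 0 < δ := by positivity
  have hlm : exp s * exp (-s) = 1 := by rw [← exp_add]; simp
  set κ : ℝ := (2 - sin θ ^ 2 / 8) / sin θ with hκ
  have hsle := sin_le_one θ
  have hκ0 : 0 < κ := by
    apply div_pos _ hsin0
    nlinarith
  have hκ1 : κ * θ ≤ 4 := by
    rw [hκ, div_mul_eq_mul_div, div_le_iff₀ hsin0]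
    nlinarith [sq_nonneg (sin θ)]
  have hm0 : 0 < exp (-s) := exp_pos _
  have hm1 : exp (-s) < 1 := by nlinarith
  set f : ℕ → ℝ := fun j => cos (j * δ) * (exp s + exp (-s)) + sin (j * δ) * κ * (exp s - exp (-s))
    with hf
  have hstep : ∀ j, |f (j + 1) - f j| < 2 := by
    intro j
    have h1 : |cos ((j + 1 : ℕ) * δ) - cos (j * δ)| ≤ δ := by
      refine (abs_cos_sub_cos_le _ _).trans (le_of_eq ?_)
      push_cast
      rw [show ((j:ℝ) + 1) * δ - j * δ = δ by ring, abs_of_pos hδ0]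
    have h2 : |sin ((j + 1 : ℕ) * δ) - sin (j * δ)| ≤ δ := by
      refine (abs_sin_sub_sin_le _ _).trans (le_of_eq ?_)
      push_cast
      rw [show ((j:ℝ) + 1) * δ - j * δ = δ by ring, abs_of_pos hδ0]
    have : f (j + 1) - f j = (cos ((j + 1 : ℕ) * δ) - cos (j * δ)) * (exp s + exp (-s))
        + (sin ((j + 1 : ℕ) * δ) - sin (j * δ)) * (κ * (exp s - exp (-s))) := by
      simp only [hf]; ring
    rw [this]
    have hA : 0 < exp s + exp (-s) := by linarith
    have hB : 0 < κ * (exp s - exp (-s)) := mul_pos hκ0 (by linarith)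
    calc _ ≤ δ * (exp s + exp (-s)) + δ * (κ * (exp s - exp (-s))) := by
            refine (abs_add_le _ _).trans ?_
            rw [abs_mul, abs_mul, abs_of_pos hA, abs_of_pos hB]
            gcongr
      _ < 2 := by
            have h3 : δ * κ ≤ 4 / 100 := by rw [hδθ] at hκ1; nlinarith
            have h4 : δ < 1 / 100 := by linarith
            have h5 : δ * (exp s + exp (-s)) ≤ 1 / 100 * 11 := by
              apply mul_le_mul h4.le (by linarith) hA.le (by norm_num)
            have h6 : (δ * κ) * (exp s - exp (-s)) ≤ 4 / 100 * 10 := by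
              apply mul_le_mul h3 (by linarith) (by linarith) (by norm_num)
            nlinarith
  have hex : ∃ j, f j ≤ 0 := by
    refine ⟨50 * n + 1, ?_⟩
    have h1 : ((50 * n + 1 : ℕ) : ℝ) * δ = δ / 2 + π := by
      rw [hδ]; push_cast; field_simp; ring
    simp only [hf]
    rw [h1, cos_add_pi, sin_add_pi]
    have hc : 0 ≤ cos (δ / 2) := cos_nonneg_of_mem_Icc ⟨by linarith, by linarith [pi_gt_three]⟩
    have hss : 0 ≤ sin (δ / 2) := sin_nonneg_of_nonneg_of_le_pi (by linarith) (by linarith [pi_gt_three])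
    have e1 : 0 ≤ cos (δ / 2) * (exp s + exp (-s)) := mul_nonneg hc (by linarith)
    have e2 : 0 ≤ sin (δ / 2) * κ * (exp s - exp (-s)) :=
      mul_nonneg (mul_nonneg hss hκ0.le) (by linarith)
    linarith
  obtain ⟨j, hj⟩ : ∃ j, |f j| < 2 := by
    classical
    have hmin : ∀ m, m < Nat.find hex → ¬ f m ≤ 0 := fun m => Nat.find_min hex
    have hsp := Nat.find_spec hex
    generalize Nat.find hex = J at *
    have hJ : J ≠ 0 := by
      rintro rfl
      simp [hf] at hsp; linarith
    obtain ⟨i, rfl⟩ := Nat.exists_eq_succ_of_ne_zero hJ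
    have h1 := hmin i (Nat.lt_succ_self i)
    have h2 := abs_lt.mp (hstep i)
    push Not at h1
    simp only [Nat.succ_eq_add_one] at *
    exact ⟨i + 1, abs_lt.mpr ⟨by linarith, by linarith⟩⟩
  rw [abs_lt] at hj
  refine ⟨(99 * n + 1) * j, arccos (f j / 2), ?_, ?_⟩
  · have hk : (((99 * n + 1) * j : ℕ) : ℝ) * θ = j * δ + ((99 * j : ℕ) : ℝ) * (2 * π) := by
      rw [hθ, hδ]; push_cast; field_simp; ring
    rw [cos_arccos (by linarith) (by linarith), sl_mul, sl_mul, ellM_pow θ hsin0.ne', hk,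
      cos_add_nat_mul_two_pi, sin_add_nat_mul_two_pi]
    simp only [hf, hκ]
    simp [diaM]
    field_simp
    ring
  · rintro ⟨r, hr⟩
    have hψ : arccos (f j / 2) = r * π := by rw [hr]; field_simp
    have hfj : f j = 2 * cos (r * π) := by
      rw [← hψ, cos_arccos (by linarith) (by linarith)]; ring
    have halg : ∀ k : ℕ, IsAlgebraic ℚ (k : ℝ) := by
      intro k
      have := isAlgebraic_algebraMap (R := ℚ) (A := ℝ) (k : ℚ)
      simpa using this
    have hfalg : IsAlgebraic ℚ (f j) := by
      rw [hfj]; exact (by simpa using halg 2 : IsAlgebraic ℚ (2:ℝ)).mul (alg_rat_mul_pi r).1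
    have hθr : θ = ((200 / (100 * n + 1) : ℚ) : ℝ) * π := by rw [hθ]; push_cast; ring
    have hjr : (j : ℝ) * δ = ((2 * j / (100 * n + 1) : ℚ) : ℝ) * π := by rw [hδ]; push_cast; ring
    have hcalg : IsAlgebraic ℚ (cos (j * δ)) := by rw [hjr]; exact (alg_rat_mul_pi _).1
    have hsalg : IsAlgebraic ℚ (sin (j * δ)) := by rw [hjr]; exact (alg_rat_mul_pi _).2
    have hsθ : IsAlgebraic ℚ (sin θ) := by rw [hθr]; exact (alg_rat_mul_pi _).2
    have hκalg : IsAlgebraic ℚ κ := by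
      have : κ = (2 - sin θ * sin θ * (8:ℝ)⁻¹) * (sin θ)⁻¹ := by rw [hκ]; ring
      rw [this]
      exact ((by simpa using halg 2 : IsAlgebraic ℚ (2:ℝ)).sub
        ((hsθ.mul hsθ).mul (by simpa using halg 8 : IsAlgebraic ℚ (8:ℝ)).inv)).mul hsθ.inv
    apply htr
    refine alg_of_lin (hcalg.add (hsalg.mul hκalg)) (hcalg.sub (hsalg.mul hκalg)) hfalg hlm
      (by simp only [hf]; ring) ?_
    by_contra! hcon
    obtain ⟨c1, c2⟩ := hcon
    have c3 : cos (j * δ) = 0 := by linarith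
    have c4 : sin (j * δ) * κ = 0 := by linarith
    have c5 : sin (j * δ) = 0 := by
      rcases mul_eq_zero.mp c4 with h | h
      · exact h
      · exact absurd h hκ0.ne'
    have := sin_sq_add_cos_sq (j * δ)
    rw [c3, c5] at this; norm_num at this



theorem ellM_tr (θ : ℝ) : (ellM θ).1 0 0 + (ellM θ).1 1 1 = 2 * cos θ := by
  simp [ellM]; ring

theorem closed_subgroup_top (s : ℝ) (hs9 : 9 < exp s) (hs10 : exp s < 10)
    (htr : ¬ IsAlgebraic ℚ (exp s)) (n : ℕ) (hn : 9 ≤ n) (θ θ' : ℝ)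
    (hθ : θ = 2 * π * 100 / (100 * n + 1)) (hθ' : Irrational (θ' / π))
    (H : Subgroup (SLR × SLR)) (hH : IsClosed (H : Set (SLR × SLR)))
    (h1 : (ellM θ, diaM s) ∈ H) (h2 : (diaM s, ellM θ') ∈ H) : H = ⊤ := by
  obtain ⟨hsin, hpow, k, ψ, hψ, hirr⟩ := exists_ell_word s hs9 hs10 htr n hn θ hθ
  obtain ⟨q, hq0, hpow⟩ : ∃ q : ℕ, q ≠ 0 ∧ ellM θ ^ q = 1 := ⟨_, Nat.succ_ne_zero _, hpow⟩
  have hs0 : s ≠ 0 := by rintro rfl; norm_num at hs9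
  have hAtr : 2 < |(diaM s).1 0 0 + (diaM s).1 1 1| := by
    have := exp_pos (-s)
    simp only [diaM]
    simp
    rw [abs_of_pos] <;> linarith
  obtain ⟨N, hN⟩ : ∃ N : Subgroup SLR, ∀ x, x ∈ N ↔ ((1 : SLR), x) ∈ H :=
    ⟨H.comap (MonoidHom.inr SLR SLR), fun x => Iff.rfl⟩
  have hNcl : IsClosed (N : Set SLR) := by
    have : (N : Set SLR) = (fun x : SLR => ((1 : SLR), x)) ⁻¹' (H : Set (SLR × SLR)) := by
      ext x; exact hN x
    rw [this]
    exact hH.preimage (by fun_prop)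
  -- the elements normalising `N`
  have hnorm : ∀ x : SLR × SLR, x ∈ H → x.2 ∈ Subgroup.normalizer (N : Set SLR) := by
    intro x hx
    have aux : ∀ x : SLR × SLR, x ∈ H → ∀ y, y ∈ N → x.2 * y * x.2⁻¹ ∈ N := by
      intro x hx y hy
      have := H.mul_mem (H.mul_mem hx ((hN y).mp hy)) (H.inv_mem hx)
      rw [hN]
      convert this using 1
      ext1 <;> simp
    rw [Subgroup.mem_normalizer_iff]
    intro y
    refine ⟨aux x hx y, fun h => ?_⟩
    have := aux x⁻¹ (H.inv_mem hx) _ h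
    convert this using 1
    simp only [Prod.snd_inv]; group
  have hncl : IsClosed ((Subgroup.normalizer (N : Set SLR) : Subgroup SLR) : Set SLR) := by
    have : ((Subgroup.normalizer (N : Set SLR) : Subgroup SLR) : Set SLR) =
        (⋂ y ∈ N, (fun x : SLR => x * y * x⁻¹) ⁻¹' (N : Set SLR)) ∩
        (⋂ y ∈ N, (fun x : SLR => x⁻¹ * y * x) ⁻¹' (N : Set SLR)) := by
      ext x
      simp only [SetLike.mem_coe, Subgroup.mem_normalizer_iff, Set.mem_inter_iff, Set.mem_iInter,
        Set.mem_preimage]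
      constructor
      · intro h
        refine ⟨fun y hy => (h y).mp hy, fun y hy => ?_⟩
        rw [h]
        convert hy using 1; group
      · rintro ⟨ha, hb⟩ y
        refine ⟨fun hy => ha y hy, fun hy => ?_⟩
        have := hb _ hy
        convert this using 1; group
    rw [this]
    refine IsClosed.inter (isClosed_biInter fun y _ => hNcl.preimage (by fun_prop))
      (isClosed_biInter fun y _ => hNcl.preimage (by fun_prop))
  have g1 : diaM s ∈ Subgroup.normalizer (N : Set SLR) := hnorm (ellM θ, diaM s) h1
  have g2 : ellM θ' ∈ Subgroup.normalizer (N : Set SLR) := hnorm (diaM s, ellM θ') h2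
  have hntop : Subgroup.normalizer (N : Set SLR) = ⊤ :=
    eq_top_of_irr (Subgroup.normalizer (N : Set SLR)) hncl (ellM θ') g2 θ' (ellM_tr θ') hθ'
      (diaM s) g1 hAtr
  have hNnormal : N.Normal := Subgroup.normalizer_eq_top_iff.mp hntop
  have hNtop : N = ⊤ := by
    refine normal_eq_top N hNnormal (q * s)
      (mul_ne_zero (Nat.cast_ne_zero.mpr hq0) hs0) ?_
    have h3 := H.pow_mem h1 q
    rw [Prod.pow_mk, hpow, ← diaM_nat] at h3
    exact (hN _).mpr h3
  have hr : ∀ x : SLR, ((1 : SLR), x) ∈ H := by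
    intro x; rw [← hN, hNtop]; trivial
  obtain ⟨L, hL⟩ : ∃ L : Subgroup SLR, ∀ x, x ∈ L ↔ (x, (1 : SLR)) ∈ H :=
    ⟨H.comap (MonoidHom.inl SLR SLR), fun x => Iff.rfl⟩
  have hLcl : IsClosed (L : Set SLR) := by
    have : (L : Set SLR) = (fun x : SLR => (x, (1 : SLR))) ⁻¹' (H : Set (SLR × SLR)) := by
      ext x; exact hL x
    rw [this]
    exact hH.preimage (by fun_prop)
  have hproj : ∀ x y, (x, y) ∈ H → x ∈ L := by
    intro x y h
    have := H.mul_mem h (hr y⁻¹)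
    rw [hL]; simpa using this
  have hLtop : L = ⊤ :=
    eq_top_of_irr L hLcl _ (L.mul_mem (L.pow_mem (hproj _ _ h1) k) (hproj _ _ h2)) ψ hψ hirr _
      (hproj _ _ h2) hAtr
  rw [eq_top_iff]
  rintro ⟨x, y⟩ -
  have hx : x ∈ L := by rw [hLtop]; trivial
  have := H.mul_mem ((hL x).mp hx) (hr y)
  simpa using this



/-- the sawtooth `t * dist (10 / t, ℤ)` -/
noncomputable def saw (t : ℝ) : ℝ := t * ‖((10 / t : ℝ) : UnitAddCircle)‖

theorem saw_abs_le (t : ℝ) : |saw t| ≤ |t| / 2 := by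
  have h1 : ‖((10 / t : ℝ) : UnitAddCircle)‖ ≤ 1 / 2 := by
    rw [UnitAddCircle.norm_eq]; exact abs_sub_round _
  have h2 : 0 ≤ ‖((10 / t : ℝ) : UnitAddCircle)‖ := norm_nonneg _
  rw [saw, abs_mul, abs_of_nonneg h2]
  nlinarith [abs_nonneg t]

theorem continuous_saw : Continuous saw := by
  rw [continuous_iff_continuousAt]
  intro t
  by_cases ht : t = 0
  · subst ht
    have h0 : saw 0 = 0 := by simp [saw]
    rw [ContinuousAt, h0]
    apply squeeze_zero_norm (a := fun t : ℝ => |t| / 2)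
    · intro t; exact saw_abs_le t
    · have : Continuous fun t : ℝ => |t| / 2 := by fun_prop
      simpa using this.tendsto 0
  · unfold saw
    apply ContinuousAt.mul continuousAt_id
    apply ContinuousAt.norm
    have h1 : ContinuousAt (fun t : ℝ => 10 / t) t := continuousAt_const.div continuousAt_id ht
    have h2 : Continuous (fun x : ℝ => (x : UnitAddCircle)) := AddCircle.continuous_mk' 1
    exact h2.continuousAt.comp h1

/-- the rotation angle (`e = 1` or `e = -1`) -/
noncomputable def ang (e t : ℝ) : ℝ := 2 * π * 100 * t / (100 * (10 + e * saw t) + t)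

theorem ang_zero (e : ℝ) : ang e 0 = 0 := by simp [ang]

theorem continuousOn_ang (e : ℝ) (he : |e| ≤ 1) : ContinuousOn (ang e) (Set.Icc 0 1) := by
  unfold ang
  have := continuous_saw
  apply ContinuousOn.div
  · fun_prop
  · fun_prop
  · intro t ht
    have h1 := saw_abs_le t
    rw [abs_of_nonneg ht.1] at h1
    have h2 : |e * saw t| ≤ 1 / 2 := by
      rw [abs_mul]
      have := ht.2
      nlinarith [abs_nonneg e, abs_nonneg (saw t)]
    have := abs_le.mp h2
    have := ht.1
    apply ne_of_gt
    linarith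

theorem ang_pos_eq (e t : ℝ) (ht : 0 < t) :
    ang e t = 2 * π * 100 / (100 * (10 / t + e * |10 / t - round (10 / t)|) + 1) := by
  rw [ang, saw, UnitAddCircle.norm_eq]
  generalize |10 / t - round (10 / t)| = d
  have : 100 * (10 + e * (t * d)) + t = t * (100 * (10 / t + e * d) + 1) := by field_simp
  rw [this, mul_comm _ t, mul_div_mul_left _ _ ht.ne']

theorem irr_aux (t : ℝ) (n : ℕ) (hirr : Irrational t) (ht : 0 < t) (h : (n:ℝ) < 20 / t) :
    Irrational (2 * π * 100 / (100 * (20 / t - n) + 1) / π) := by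
  rintro ⟨r, hr⟩
  have hpi := pi_pos
  have hpos : 0 < 100 * (20 / t - n) + 1 := by linarith
  have h1 : (r : ℝ) * (100 * (20 / t - n) + 1) = 200 := by
    rw [hr]
    generalize 100 * (20 / t - (n : ℝ)) + 1 = D at hpos
    field_simp
    norm_num
  have hr0 : (r : ℝ) ≠ 0 := by rintro h0; rw [h0] at h1; norm_num at h1
  apply hirr
  refine ⟨20 / ((200 / r - 1) / 100 + n), ?_⟩
  push_cast
  have h2 : (200 / (r:ℝ) - 1) / 100 + n = 20 / t := by
    rw [← h1]; field_simp; ring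
  rw [h2]; field_simp

theorem ang_cases (t : ℝ) (ht : t ∈ Set.Icc (0:ℝ) 1) (hirr : Irrational t) :
    ∃ n : ℕ, 9 ≤ n ∧
      ((ang 1 t = 2 * π * 100 / (100 * n + 1) ∧ Irrational (ang (-1) t / π)) ∨
       (ang (-1) t = 2 * π * 100 / (100 * n + 1) ∧ Irrational (ang 1 t / π))) := by
  have ht0 : 0 < t := lt_of_le_of_ne ht.1 (fun h => hirr ⟨0, by simp [← h]⟩)
  have hy : 10 ≤ 10 / t := by rw [le_div_iff₀ ht0]; linarith [ht.2]
  have hd := abs_sub_round (10 / t)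
  have hd' := abs_le.mp hd
  have hn9 : 9 ≤ round (10 / t) := by
    have : (9:ℝ) < round (10 / t) := by linarith
    exact_mod_cast this.le
  obtain ⟨n, hn⟩ := Int.eq_ofNat_of_zero_le (by linarith : 0 ≤ round (10 / t))
  have hnr : (round (10 / t) : ℝ) = n := by rw [hn]; simp
  have h20 : 20 / t = 2 * (10 / t) := by ring
  have hirr2 := irr_aux t n hirr ht0 (by rw [h20, ← hnr]; linarith)
  refine ⟨n, by omega, ?_⟩
  rw [ang_pos_eq _ _ ht0, ang_pos_eq _ _ ht0, hnr]
  rw [h20] at hirr2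
  rcases le_total 0 (10 / t - n) with h | h
  · right
    rw [abs_of_nonneg h]
    refine ⟨by ring_nf, ?_⟩
    convert hirr2 using 5; ring
  · left
    rw [abs_of_nonpos h]
    refine ⟨by ring_nf, ?_⟩
    convert hirr2 using 5; ring

/-! ### ping-pong at `t = 0` -/

theorem pp_a {l m u v : ℝ} (hl : 9 < l) (hlm : l * m = 1) (h : v ^ 2 ≤ 9 * u ^ 2) :
    9 * (m * v) ^ 2 ≤ (l * u) ^ 2 ∧ 8 * (u ^ 2 + v ^ 2) ≤ (l * u) ^ 2 + (m * v) ^ 2 := by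
  have hm : m ^ 2 ≤ 1 := by
    have : 0 < m := by nlinarith
    nlinarith
  have hl2 : 81 ≤ l ^ 2 := by nlinarith
  have e1 : 81 * u ^ 2 ≤ (l * u) ^ 2 := by rw [mul_pow]; nlinarith [sq_nonneg u]
  have e2 : (m * v) ^ 2 ≤ v ^ 2 := by rw [mul_pow]; nlinarith [sq_nonneg v]
  constructor
  · nlinarith
  · nlinarith [sq_nonneg (m * v)]

/-- the letters -/
noncomputable def letr (g : Fin 2 → SLR) (x : Fin 2 × Bool) : SLR := cond x.2 (g x.1) (g x.1)⁻¹

def okc (i : Fin 2) (x : Fin 2 × Bool) (u v : ℝ) : Prop :=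
  if x.1 = i then (if x.2 then v ^ 2 ≤ 9 * u ^ 2 else u ^ 2 ≤ 9 * v ^ 2)
  else u ≠ v ∧ (if x.2 then -(2 * (u - v) ^ 2) ≤ (u + v) * (u - v)
    else (u + v) * (u - v) ≤ 2 * (u - v) ^ 2)

def conec (i : Fin 2) (x : Fin 2 × Bool) (u v : ℝ) : Prop :=
  if x.1 = i then (if x.2 then 9 * v ^ 2 ≤ u ^ 2 else 9 * u ^ 2 ≤ v ^ 2)
  else u ≠ v ∧ (if x.2 then 2 * (u - v) ^ 2 ≤ (u + v) * (u - v)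
    else (u + v) * (u - v) ≤ -(2 * (u - v) ^ 2))

theorem ok_of_cone (i : Fin 2) (x y : Fin 2 × Bool) (u v : ℝ) (h : conec i y u v)
    (hxy : x.1 = y.1 → x.2 = y.2) (hne : 0 < u ^ 2 + v ^ 2) : okc i x u v := by
  obtain ⟨x1, x2⟩ := x
  obtain ⟨y1, y2⟩ := y
  have q1 : 9 * v ^ 2 ≤ u ^ 2 → u ≠ v ∧ -(2 * (u - v) ^ 2) ≤ (u + v) * (u - v) ∧
      (u + v) * (u - v) ≤ 2 * (u - v) ^ 2 := by
    intro hh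
    refine ⟨?_, ?_, ?_⟩
    · rintro rfl; nlinarith
    · nlinarith [sq_nonneg (u - v), sq_nonneg v]
    · nlinarith [sq_nonneg (u - v), sq_nonneg v, sq_nonneg (u - 3 * v), sq_nonneg (u + v), sq_nonneg (u + 3 * v)]
  have q2 : 9 * u ^ 2 ≤ v ^ 2 → u ≠ v ∧ -(2 * (u - v) ^ 2) ≤ (u + v) * (u - v) ∧
      (u + v) * (u - v) ≤ 2 * (u - v) ^ 2 := by
    intro hh
    refine ⟨?_, ?_, ?_⟩
    · rintro rfl; nlinarith
    · nlinarith [sq_nonneg (u - v), sq_nonneg u, sq_nonneg (v - 3 * u)]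
    · nlinarith [sq_nonneg (u - v), sq_nonneg u]
  have q3 : u ≠ v → 2 * (u - v) ^ 2 ≤ (u + v) * (u - v) → v ^ 2 ≤ 9 * u ^ 2 ∧ u ^ 2 ≤ 9 * v ^ 2 := by
    intro _ hh
    constructor <;> nlinarith [sq_nonneg (u - v), sq_nonneg (u - 3 * v), sq_nonneg (v - 3 * u), sq_nonneg (u + v)]
  have q4 : u ≠ v → (u + v) * (u - v) ≤ -(2 * (u - v) ^ 2) → v ^ 2 ≤ 9 * u ^ 2 ∧ u ^ 2 ≤ 9 * v ^ 2 := by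
    intro _ hh
    constructor <;> nlinarith [sq_nonneg (u - v), sq_nonneg (u - 3 * v), sq_nonneg (v - 3 * u), sq_nonneg (u + v)]
  unfold conec at h
  unfold okc
  have hother : x1 ≠ i → y1 ≠ i → x1 = y1 := by omega
  by_cases hx : x1 = i <;> by_cases hy : y1 = i <;> cases x2 <;> cases y2 <;>
    simp_all <;> nlinarith [sq_nonneg (u - v), sq_nonneg u, sq_nonneg v]

theorem step_cone (i : Fin 2) (s : ℝ) (hs : 9 < exp s) (g : Fin 2 → SLR) (hgi : g i = diaM s)
    (hgo : ∀ j, j ≠ i → g j = ellM 0) (x : Fin 2 × Bool) (p : SLR) (u v u' v' : ℝ)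
    (hu : u = p.1 0 0 - p.1 0 1) (hv : v = p.1 1 0 - p.1 1 1)
    (hu' : u' = (letr g x * p).1 0 0 - (letr g x * p).1 0 1)
    (hv' : v' = (letr g x * p).1 1 0 - (letr g x * p).1 1 1)
    (hok : okc i x u v) :
    conec i x u' v' ∧ (if x.1 = i then 8 else 1) * (u ^ 2 + v ^ 2) ≤ u' ^ 2 + v' ^ 2 := by
  have e3 : exp s * exp (-s) = 1 := by rw [← exp_add]; simp
  obtain ⟨x1, x2⟩ := x
  unfold okc at hok
  unfold conec
  rw [sl_mul, sl_mul] at hu' hv'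
  by_cases hx : x1 = i
  · subst hx
    cases x2
    · have e : letr g (x1, false) = diaM (-s) := by simp [letr, hgi, diaM_neg]
      rw [e] at hu' hv'
      have a1 : u' = exp (-s) * u := by rw [hu', hu]; simp [diaM]; ring
      have a2 : v' = exp s * v := by rw [hv', hv]; simp [diaM]; ring
      simp at hok
      have := pp_a hs e3 hok
      rw [← a1, ← a2] at this
      simp
      exact ⟨this.1, by linarith⟩
    · have e : letr g (x1, true) = diaM s := by simp [letr, hgi]
      rw [e] at hu' hv'
      have a1 : u' = exp s * u := by rw [hu', hu]; simp [diaM]; ring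
      have a2 : v' = exp (-s) * v := by rw [hv', hv]; simp [diaM]; ring
      simp at hok
      have := pp_a hs e3 hok
      rw [← a1, ← a2] at this
      simp
      exact this
  · simp only [hx, if_false] at hok ⊢
    obtain ⟨hne, hok⟩ := hok
    cases x2
    · have e : letr g (x1, false) = (ellM 0)⁻¹ := by simp [letr, hgo x1 hx]
      rw [e, sl_inv] at hu' hv'
      have a1 : u' = - u + 2 * v := by rw [hu', hu, hv]; simp [ellM]; ring
      have a2 : v' = -2 * u + 3 * v := by rw [hv', hu, hv]; simp [ellM]; ring
      simp at hok ⊢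
      rw [a1, a2]
      refine ⟨⟨?_, ?_⟩, ?_⟩
      · intro h; apply hne; linarith
      · nlinarith
      · nlinarith
    · have e : letr g (x1, true) = ellM 0 := by simp [letr, hgo x1 hx]
      rw [e] at hu' hv'
      have a1 : u' = 3 * u - 2 * v := by rw [hu', hu, hv]; simp [ellM]; ring
      have a2 : v' = 2 * u - v := by rw [hv', hu, hv]; simp [ellM]; ring
      simp at hok ⊢
      rw [a1, a2]
      refine ⟨⟨?_, ?_⟩, ?_⟩
      · intro h; apply hne; linarith
      · nlinarith
      · nlinarith

theorem pingpong (i : Fin 2) (s : ℝ) (hs : 9 < exp s) (g : Fin 2 → SLR) (hgi : g i = diaM s)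
    (hgo : ∀ j, j ≠ i → g j = ellM 0) (L : List (Fin 2 × Bool)) (hL : FreeGroup.IsReduced L) :
    2 * 8 ^ (L.countP fun x => x.1 = i) ≤
      ((L.map (letr g)).prod.1 0 0 - (L.map (letr g)).prod.1 0 1) ^ 2 +
      ((L.map (letr g)).prod.1 1 0 - (L.map (letr g)).prod.1 1 1) ^ 2 ∧
    ∀ x L', L = x :: L' → conec i x
      ((L.map (letr g)).prod.1 0 0 - (L.map (letr g)).prod.1 0 1)
      ((L.map (letr g)).prod.1 1 0 - (L.map (letr g)).prod.1 1 1) := by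
  induction L with
  | nil => simp; norm_num
  | cons x L ih =>
    have hL' : FreeGroup.IsReduced L := List.IsChain.of_cons hL
    obtain ⟨ih1, ih2⟩ := ih hL'
    rw [List.map_cons, List.prod_cons]
    have hpos : (0:ℝ) < 2 * 8 ^ (L.countP fun x => x.1 = i) := by positivity
    have hok : okc i x
        ((L.map (letr g)).prod.1 0 0 - (L.map (letr g)).prod.1 0 1)
        ((L.map (letr g)).prod.1 1 0 - (L.map (letr g)).prod.1 1 1) := by
      cases L with
      | nil =>
        simp [okc]
        norm_num
      | cons y L'' =>
        exact ok_of_cone i x y _ _ (ih2 y L'' rfl)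
          ((FreeGroup.isReduced_cons_cons.mp hL).1) (lt_of_lt_of_le hpos ih1)
    obtain ⟨h1, h2⟩ := step_cone i s hs g hgi hgo x (L.map (letr g)).prod _ _ _ _ rfl rfl rfl rfl hok
    refine ⟨?_, ?_⟩
    · refine le_trans ?_ h2
      rw [List.countP_cons]
      by_cases hx : x.1 = i
      · simp only [hx, decide_true, if_true, pow_succ]
        linarith
      · simp only [hx, if_false, decide_false, one_mul]
        simpa using ih1
    · intro x' L' hxl
      obtain ⟨rfl, -⟩ := List.cons.inj hxl
      exact h1

theorem opNorm2_lower (g : SLR) :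
    (g.1 0 0 - g.1 0 1) ^ 2 + (g.1 1 0 - g.1 1 1) ^ 2 ≤ 2 * opNorm2 g.1 ^ 2 := by
  have h := (LinearMap.toContinuousLinearMap (Matrix.toEuclideanLin g.1)).le_opNorm (!₂[1, -1])
  have h1 : ‖(!₂[1, -1] : EuclideanSpace ℝ (Fin 2))‖ ^ 2 = 2 := by
    rw [EuclideanSpace.norm_sq_eq]; simp; norm_num
  have h2 : ‖LinearMap.toContinuousLinearMap (Matrix.toEuclideanLin g.1) (!₂[1, -1])‖ ^ 2 =
      (g.1 0 0 - g.1 0 1) ^ 2 + (g.1 1 0 - g.1 1 1) ^ 2 := by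
    rw [EuclideanSpace.norm_sq_eq]
    simp [Matrix.toLpLin_apply, Matrix.mulVec, dotProduct, Fin.sum_univ_two, sub_eq_add_neg]
  have h3 := pow_le_pow_left₀ (norm_nonneg _) h 2
  rw [h2, mul_pow, h1] at h3
  unfold opNorm2
  linarith

theorem opNorm2_pos (g : SLR) : 0 < opNorm2 g.1 := by
  have h0 : 0 ≤ opNorm2 g.1 := norm_nonneg _
  rcases h0.lt_or_eq with h | h
  · exact h
  · exfalso
    have := opNorm2_lower g
    rw [← h] at this
    have h1 : g.1 0 0 - g.1 0 1 = 0 := by nlinarith [sq_nonneg (g.1 0 0 - g.1 0 1), sq_nonneg (g.1 1 0 - g.1 1 1)]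
    have h2 : g.1 1 0 - g.1 1 1 = 0 := by nlinarith [sq_nonneg (g.1 0 0 - g.1 0 1), sq_nonneg (g.1 1 0 - g.1 1 1)]
    have hd := sl_det g
    have : (0:ℝ) = 1 := by linear_combination hd - g.1 1 1 * h1 + g.1 0 1 * h2
    norm_num at this

theorem mu2_lower (g : SLR) (k : ℕ)
    (h : 2 * 8 ^ k ≤ (g.1 0 0 - g.1 0 1) ^ 2 + (g.1 1 0 - g.1 1 1) ^ 2) : (k : ℝ) ≤ mu2 g := by
  have h1 := opNorm2_lower g
  have h2 : (8:ℝ) ^ k ≤ opNorm2 g.1 ^ 2 := by linarith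
  have h3 := log_le_log (by positivity) h2
  rw [log_pow, log_pow] at h3
  have h8 : 1 ≤ log 8 := by
    rw [le_log_iff_exp_le (by norm_num)]
    linarith [exp_one_lt_d9]
  unfold mu2
  push_cast at h3
  nlinarith [(Nat.cast_nonneg k : (0:ℝ) ≤ k)]

theorem opNorm2_mul (g h : SLR) : opNorm2 (g * h).1 ≤ opNorm2 g.1 * opNorm2 h.1 := by
  unfold opNorm2
  refine le_trans (le_of_eq ?_) (ContinuousLinearMap.opNorm_comp_le
    (LinearMap.toContinuousLinearMap (Matrix.toEuclideanLin g.1))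
    (LinearMap.toContinuousLinearMap (Matrix.toEuclideanLin h.1)))
  congr 1
  ext x : 1
  change Matrix.toEuclideanLin (g.1 * h.1) x = Matrix.toEuclideanLin g.1 (Matrix.toEuclideanLin h.1 x)
  simp [Matrix.toLpLin_apply]

theorem mu2_mul (g h : SLR) : mu2 (g * h) ≤ mu2 g + mu2 h := by
  unfold mu2
  have h1 := log_le_log (opNorm2_pos _) (opNorm2_mul g h)
  rw [log_mul (opNorm2_pos g).ne' (opNorm2_pos h).ne'] at h1
  linarith

theorem mu2_one : mu2 1 ≤ 0 := by
  have : opNorm2 (1 : SLR).1 ≤ 1 := by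
    unfold opNorm2
    apply ContinuousLinearMap.opNorm_le_bound _ (by norm_num)
    intro x
    change ‖Matrix.toEuclideanLin (1 : Matrix (Fin 2) (Fin 2) ℝ) x‖ ≤ _
    simp [Matrix.toLpLin_apply]
  have h2 := log_nonpos (opNorm2_pos 1).le this
  unfold mu2
  linarith

theorem mu2_list (g : Fin 2 → SLR) (C : ℝ) (hC : ∀ x, mu2 (letr g x) ≤ C)
    (L : List (Fin 2 × Bool)) : mu2 (L.map (letr g)).prod ≤ C * L.length := by
  induction L with
  | nil => simpa using mu2_one
  | cons x L ih =>
    rw [List.map_cons, List.prod_cons]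
    have := mu2_mul (letr g x) (L.map (letr g)).prod
    have := hC x
    push_cast [List.length_cons]
    linarith

theorem lift_eq (g : Fin 2 → SLR) (γ : FreeGroup (Fin 2)) :
    FreeGroup.lift g γ = (γ.toWord.map (letr g)).prod := by
  conv_lhs => rw [← FreeGroup.mk_toWord (x := γ)]
  rw [FreeGroup.lift_mk]
  rfl

theorem exists_transc : ∃ s : ℝ, 9 < exp s ∧ exp s < 10 ∧ ¬ IsAlgebraic ℚ (exp s) := by
  have hc : Set.Countable {x : ℝ | IsAlgebraic ℚ x} := Algebraic.countable ℚ ℝ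
  have : ¬ (Set.Ioo (9:ℝ) 10 ⊆ {x : ℝ | IsAlgebraic ℚ x}) := by
    intro h
    have h1 := Cardinal.le_aleph0_iff_set_countable.mpr (hc.mono h)
    rw [Cardinal.mk_Ioo_real (by norm_num)] at h1
    exact absurd h1 (not_le.mpr Cardinal.aleph0_lt_continuum)
  obtain ⟨x, hx, hx'⟩ := Set.not_subset.mp this
  refine ⟨log x, ?_⟩
  rw [exp_log (by linarith [hx.1])]
  exact ⟨hx.1, hx.2, hx'⟩

noncomputable def gen1 (s t : ℝ) : Fin 2 → SLR := ![ellM (ang 1 t), diaM s]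
noncomputable def gen2 (s t : ℝ) : Fin 2 → SLR := ![diaM s, ellM (ang (-1) t)]

noncomputable def repr2 (s t : ℝ) : FreeGroup (Fin 2) →* SLR × SLR :=
  (FreeGroup.lift (gen1 s t)).prod (FreeGroup.lift (gen2 s t))

theorem continuousOn_lift (g : ℝ → Fin 2 → SLR) (S : Set ℝ)
    (hg : ∀ i, ContinuousOn (fun t => g t i) S) (γ : FreeGroup (Fin 2)) :
    ContinuousOn (fun t => FreeGroup.lift (g t) γ) S := by
  induction γ using FreeGroup.induction_on with
  | C1 => simpa using continuousOn_const
  | of i => simpa using hg i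
  | inv_of i h =>
    have e : (fun t => FreeGroup.lift (g t) (FreeGroup.of i)⁻¹) = fun t => (g t i)⁻¹ := by
      funext t; rw [map_inv, FreeGroup.lift_apply_of]
    exact e ▸ (hg i).inv
  | mul x y hx hy =>
    simp only [map_mul]
    exact hx.mul hy

theorem qi_side (i : Fin 2) (s : ℝ) (hs : 9 < exp s) (g : Fin 2 → SLR) (hgi : g i = diaM s)
    (hgo : ∀ j, j ≠ i → g j = ellM 0) (γ : FreeGroup (Fin 2)) :
    ((γ.toWord.countP fun x => x.1 = i : ℕ) : ℝ) ≤ mu2 (FreeGroup.lift g γ) := by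
  rw [lift_eq]
  exact mu2_lower _ _ (pingpong i s hs g hgi hgo γ.toWord FreeGroup.isReduced_toWord).1

theorem exists_bound (g : Fin 2 → SLR) : ∃ C : ℝ, 1 ≤ C ∧
    ∀ γ : FreeGroup (Fin 2), mu2 (FreeGroup.lift g γ) ≤ C * wordLength γ := by
  refine ⟨1 + ∑ x : Fin 2 × Bool, |mu2 (letr g x)|, ?_, ?_⟩
  · have : 0 ≤ ∑ x : Fin 2 × Bool, |mu2 (letr g x)| := Finset.sum_nonneg fun _ _ => abs_nonneg _
    linarith
  · intro γ
    rw [lift_eq]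
    apply mu2_list
    intro x
    have := Finset.single_le_sum (f := fun x : Fin 2 × Bool => |mu2 (letr g x)|)
      (fun _ _ => abs_nonneg _) (Finset.mem_univ x)
    have := le_abs_self (mu2 (letr g x))
    beta_reduce at *
    linarith

theorem count_add (L : List (Fin 2 × Bool)) :
    (L.countP fun x => x.1 = 1) + (L.countP fun x => x.1 = 0) = L.length := by
  induction L with
  | nil => simp
  | cons x L ih =>
    obtain ⟨x1, x2⟩ := x
    rw [List.countP_cons, List.countP_cons, List.length_cons, ← ih]
    fin_cases x1 <;> simp <;> omega

theorem repr2_dense (s : ℝ) (hs9 : 9 < exp s) (hs10 : exp s < 10)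
    (htr : ¬ IsAlgebraic ℚ (exp s)) (t : ℝ) (ht : t ∈ Set.Icc (0:ℝ) 1) (hirr : Irrational t) :
    (repr2 s t).range.topologicalClosure = ⊤ := by
  set H := (repr2 s t).range.topologicalClosure with hH
  have hcl : IsClosed (H : Set (SLR × SLR)) := Subgroup.isClosed_topologicalClosure _
  have h1 : (ellM (ang 1 t), diaM s) ∈ H :=
    Subgroup.le_topologicalClosure _ ⟨FreeGroup.of 0, by simp [repr2, gen1, gen2]⟩
  have h2 : (diaM s, ellM (ang (-1) t)) ∈ H :=
    Subgroup.le_topologicalClosure _ ⟨FreeGroup.of 1, by simp [repr2, gen1, gen2]⟩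
  obtain ⟨n, hn, ⟨ha, hb⟩ | ⟨ha, hb⟩⟩ := ang_cases t ht hirr
  · exact closed_subgroup_top s hs9 hs10 htr n hn _ _ ha hb H hcl h1 h2
  · obtain ⟨K, hK⟩ : ∃ K : Subgroup (SLR × SLR), ∀ x, x ∈ K ↔ (x.2, x.1) ∈ H :=
      ⟨H.comap (MulEquiv.prodComm : SLR × SLR ≃* SLR × SLR).toMonoidHom, fun x => Iff.rfl⟩
    have hKcl : IsClosed (K : Set (SLR × SLR)) := by
      have : (K : Set (SLR × SLR)) = Prod.swap ⁻¹' (H : Set (SLR × SLR)) := by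
        ext x; exact hK x
      rw [this]
      exact hcl.preimage continuous_swap
    have := closed_subgroup_top s hs9 hs10 htr n hn _ _ ha hb K hKcl
      ((hK _).mpr h2) ((hK _).mpr h1)
    rw [eq_top_iff]
    rintro ⟨x, y⟩ -
    have h3 : (y, x) ∈ K := by rw [this]; trivial
    exact (hK _).mp h3



end PF

/-- There is a continuous family `(ρ_t)_{t ∈ [0,1]}` of homomorphisms from the free group on
two generators to `SL(2,ℝ) × SL(2,ℝ)` such that `ρ₀` is a quasi-isometric embedding while
`ρ_t` has dense image for every irrational `t`. -/
theorem stmt0 :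
    ∃ ρ : ℝ → (FreeGroup (Fin 2) →*
        Matrix.SpecialLinearGroup (Fin 2) ℝ × Matrix.SpecialLinearGroup (Fin 2) ℝ),
      -- (1) continuity in `t` (for the matrix topology on each factor)
      (∀ γ : FreeGroup (Fin 2),
        ContinuousOn (fun t : ℝ =>
          (((ρ t γ).1 : Matrix (Fin 2) (Fin 2) ℝ),
            ((ρ t γ).2 : Matrix (Fin 2) (Fin 2) ℝ))) (Set.Icc 0 1)) ∧
      -- (2) `ρ₀` is a quasi-isometric embedding
      (∃ c C : ℝ, 1 ≤ c ∧ 0 ≤ C ∧ ∀ γ : FreeGroup (Fin 2),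
        c⁻¹ * (wordLength γ : ℝ) - C ≤ mu2 (ρ 0 γ).1 + mu2 (ρ 0 γ).2 ∧
        mu2 (ρ 0 γ).1 + mu2 (ρ 0 γ).2 ≤ c * (wordLength γ : ℝ) + C) ∧
      -- (3) dense image for irrational `t`
      (∀ t ∈ Set.Icc (0 : ℝ) 1, Irrational t →
        ∀ p : Matrix.SpecialLinearGroup (Fin 2) ℝ × Matrix.SpecialLinearGroup (Fin 2) ℝ,
          ((p.1 : Matrix (Fin 2) (Fin 2) ℝ), (p.2 : Matrix (Fin 2) (Fin 2) ℝ)) ∈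
            closure (Set.range fun γ : FreeGroup (Fin 2) =>
              (((ρ t γ).1 : Matrix (Fin 2) (Fin 2) ℝ),
                ((ρ t γ).2 : Matrix (Fin 2) (Fin 2) ℝ)))) := by
  obtain ⟨s, hs9, hs10, htr⟩ := exists_transc
  refine ⟨repr2 s, ?_, ?_, ?_⟩
  · intro γ
    have hval : Continuous fun g : Matrix.SpecialLinearGroup (Fin 2) ℝ =>
        (g : Matrix (Fin 2) (Fin 2) ℝ) := continuous_subtype_val
    apply ContinuousOn.prodMk
    · refine hval.comp_continuousOn (continuousOn_lift (gen1 s) _ ?_ γ)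
      intro i
      fin_cases i
      · exact continuous_ellM.comp_continuousOn (continuousOn_ang 1 (by norm_num))
      · exact continuousOn_const
    · refine hval.comp_continuousOn (continuousOn_lift (gen2 s) _ ?_ γ)
      intro i
      fin_cases i
      · exact continuousOn_const
      · exact continuous_ellM.comp_continuousOn (continuousOn_ang (-1) (by norm_num))
  · obtain ⟨C1, h1, hC1⟩ := exists_bound (gen1 s 0)
    obtain ⟨C2, h2, hC2⟩ := exists_bound (gen2 s 0)
    refine ⟨C1 + C2, 0, by linarith, le_refl _, ?_⟩
    intro γ
    have a1 := qi_side 1 s hs9 (gen1 s 0) rfl (by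
      intro j hj
      have : j = 0 := by omega
      subst this
      simp [gen1, ang_zero]) γ
    have a2 := qi_side 0 s hs9 (gen2 s 0) rfl (by
      intro j hj
      have : j = 1 := by omega
      subst this
      simp [gen2, ang_zero]) γ
    have b1 := hC1 γ
    have b2 := hC2 γ
    have hlen : ((γ.toWord.countP fun x => x.1 = 1 : ℕ) : ℝ) +
        ((γ.toWord.countP fun x => x.1 = 0 : ℕ) : ℝ) = wordLength γ := by
      rw [← Nat.cast_add, count_add]; rfl
    have hw : (0:ℝ) ≤ wordLength γ := Nat.cast_nonneg _
    change _ ≤ mu2 (FreeGroup.lift (gen1 s 0) γ) + mu2 (FreeGroup.lift (gen2 s 0) γ) ∧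
      mu2 (FreeGroup.lift (gen1 s 0) γ) + mu2 (FreeGroup.lift (gen2 s 0) γ) ≤ _
    have hinv : (C1 + C2)⁻¹ ≤ 1 := inv_le_one_of_one_le₀ (by linarith)
    constructor
    · nlinarith
    · linarith
  · intro t ht hirr p
    have hd := repr2_dense s hs9 hs10 htr t ht hirr
    have hp : p ∈ closure ((repr2 s t).range :
        Set (Matrix.SpecialLinearGroup (Fin 2) ℝ × Matrix.SpecialLinearGroup (Fin 2) ℝ)) := by
      rw [← Subgroup.topologicalClosure_coe, hd]; trivial
    have hval : Continuous fun g : Matrix.SpecialLinearGroup (Fin 2) ℝ =>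
        (g : Matrix (Fin 2) (Fin 2) ℝ) := continuous_subtype_val
    have hcont : Continuous fun q : Matrix.SpecialLinearGroup (Fin 2) ℝ ×
        Matrix.SpecialLinearGroup (Fin 2) ℝ =>
        ((q.1 : Matrix (Fin 2) (Fin 2) ℝ), (q.2 : Matrix (Fin 2) (Fin 2) ℝ)) :=
      (hval.comp continuous_fst).prodMk (hval.comp continuous_snd)
    refine (map_mem_closure hcont hp (t := Set.range fun γ : FreeGroup (Fin 2) =>
      (((repr2 s t γ).1 : Matrix (Fin 2) (Fin 2) ℝ),
        ((repr2 s t γ).2 : Matrix (Fin 2) (Fin 2) ℝ))) ?_ :)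
    rintro q ⟨γ, rfl⟩
    exact ⟨γ, rfl⟩
end

section
/- Let d ≥ 2 and g ∈ GL(d,ℝ), and for every integer n ≥ 1 fix a singular value decomposition gⁿ = k(n)·diag(α(n))·k'(n). Then the following are equivalent: (i) g is proximal in the projective space P(ℝ^d), i.e. there exist a nonzero vector v ∈ ℝ^d, a scalar c ∈ ℝ with g·v = c·v, a g-invariant linear subspace W with ℝ^d = ℝv ⊕ W, and constants 0 ≤ ρ < |c| and C₀ > 0 such that ‖gⁿ·x‖ ≤ C₀·ρⁿ·‖x‖ for all x ∈ W and all n ∈ ℕ; (ii) log(α(n) 0) − log(α(n) 1) − 2·log n → +∞ as n → +∞. -/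
open Matrix

/-- The action of a `d × d` real matrix on Euclidean `ℝ^d`. -/
noncomputable def appE {d : ℕ} (M : Matrix (Fin d) (Fin d) ℝ)
    (v : EuclideanSpace ℝ (Fin d)) : EuclideanSpace ℝ (Fin d) :=
  Matrix.toEuclideanLin M v

/-- `IsSVD g k α k'` means `g = k · diag(α) · k'` is a singular value decomposition:
`k, k'` are orthogonal and `α` is positive and nonincreasing. -/
def IsSVD {d : ℕ} (g k : Matrix (Fin d) (Fin d) ℝ) (α : Fin d → ℝ)
    (k' : Matrix (Fin d) (Fin d) ℝ) : Prop :=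
  k * kᵀ = 1 ∧ k' * k'ᵀ = 1 ∧ (∀ i, 0 < α i) ∧ Antitone α ∧
    g = k * Matrix.diagonal α * k'

section abstract_part
variable {E : Type*} [NormedAddCommGroup E] [InnerProductSpace ℝ E]

lemma sign_fix (x y : E) (hx : ‖x‖ = 1) (hy : ‖y‖ = 1) (μ e : ℝ) (h : ‖x - μ • y‖ ≤ e) :
    ∃ ε : ℝ, (ε = 1 ∨ ε = -1) ∧ ‖x - ε • y‖ ≤ 2 * e := by
  have key : |(|μ| - 1)| ≤ e := by
    have h1 := abs_norm_sub_norm_le x (μ • y)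
    rw [norm_smul, hx, hy, Real.norm_eq_abs, mul_one, abs_sub_comm] at h1
    linarith
  have gen : ∀ ε : ℝ, ‖x - ε • y‖ ≤ e + |μ - ε| := by
    intro ε
    have : x - ε • y = (x - μ • y) + (μ - ε) • y := by rw [sub_smul]; abel
    rw [this]
    refine (norm_add_le _ _).trans ?_
    rw [norm_smul, hy, Real.norm_eq_abs, mul_one]
    linarith
  rcases le_total 0 μ with h0 | h0
  · refine ⟨1, Or.inl rfl, ?_⟩
    have := gen 1
    rw [abs_of_nonneg h0] at key
    linarith
  · refine ⟨-1, Or.inr rfl, ?_⟩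
    have := gen (-1)
    rw [abs_of_nonpos h0] at key
    have h2 : |μ - -1| = |-μ - 1| := by rw [← abs_neg]; congr 1; ring
    rw [h2] at this
    linarith

lemma proj_bound (w y : E) (hw : ‖w‖ = 1) (μ e : ℝ) (h : ‖y - μ • w‖ ≤ e) :
    ‖y - (inner ℝ w y) • w‖ ≤ 2 * e := by
  have h1 : y - (inner ℝ w y : ℝ) • w = (y - μ • w) - (inner ℝ w (y - μ • w) : ℝ) • w := by
    rw [inner_sub_right, inner_smul_right, real_inner_self_eq_norm_sq, hw, sub_smul]
    simp
  rw [h1]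
  refine (norm_sub_le _ _).trans ?_
  rw [norm_smul, hw, mul_one]
  have := norm_inner_le_norm (𝕜 := ℝ) w (y - μ • w)
  rw [hw, one_mul] at this
  linarith

lemma tail_bound (A : ℕ → E) (N : ℕ) (hN : 1 ≤ N) (δ : ℝ)
    (h : ∀ n, N ≤ n → ‖A (n+1) - A n‖ ≤ δ * (1 / (n:ℝ) - 1 / ((n:ℝ)+1))) (n : ℕ) (hn : N ≤ n)
    (j : ℕ) : ‖A (n + j) - A n‖ ≤ δ * (1 / (n:ℝ) - 1 / ((n + j : ℕ):ℝ)) := by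
  induction j with
  | zero => simp
  | succ j ih =>
    have h1 := h (n + j) (by omega)
    have : A (n + (j+1)) - A n = (A (n + j + 1) - A (n+j)) + (A (n+j) - A n) := by
      rw [← add_assoc]; abel
    rw [this]
    refine (norm_add_le _ _).trans ?_
    have e : ((n + (j+1) : ℕ) : ℝ) = ((n + j : ℕ) : ℝ) + 1 := by push_cast; ring
    rw [e]
    linarith

variable [FiniteDimensional ℝ E]

lemma limit_exists (A : ℕ → E) (N : ℕ) (hN : 1 ≤ N) (δ : ℝ) (hδ : 0 ≤ δ)
    (h : ∀ n, N ≤ n → ‖A (n+1) - A n‖ ≤ δ * (1 / (n:ℝ) - 1 / ((n:ℝ)+1))) :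
    ∃ v, Filter.Tendsto A Filter.atTop (nhds v) ∧ ∀ n, N ≤ n → ‖A n - v‖ ≤ δ / n := by
  have tb : ∀ n m, N ≤ n → n ≤ m → ‖A m - A n‖ ≤ δ / n := by
    intro n m hn hm
    obtain ⟨j, rfl⟩ := Nat.exists_eq_add_of_le hm
    have := tail_bound A N hN δ h n hn j
    refine this.trans ?_
    rw [mul_sub, mul_one_div]
    have : 0 ≤ δ * (1 / ((n+j : ℕ):ℝ)) := by positivity
    linarith
  have hc : CauchySeq (fun i => A (i + N)) := by
    apply cauchySeq_of_le_tendsto_0' (fun i => δ / ((i + N : ℕ) : ℝ))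
    · intro n m hnm
      rw [dist_comm, dist_eq_norm]
      exact tb _ _ (by omega) (by omega)
    · exact (Filter.tendsto_add_atTop_iff_nat (f := fun i : ℕ => δ / (i:ℝ)) N).2
        (tendsto_const_div_atTop_nhds_zero_nat δ)
  have : CompleteSpace E := FiniteDimensional.complete ℝ E
  obtain ⟨v, hv⟩ := cauchySeq_tendsto_of_complete hc
  have hv' : Filter.Tendsto A Filter.atTop (nhds v) := (Filter.tendsto_add_atTop_iff_nat N).1 hv
  refine ⟨v, hv', fun n hn => ?_⟩
  have h2 : Filter.Tendsto (fun m => ‖A m - A n‖) Filter.atTop (nhds ‖v - A n‖) :=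
    (hv'.sub_const _).norm
  rw [norm_sub_rev]
  refine le_of_tendsto h2 ?_
  filter_upwards [Filter.eventually_ge_atTop n] with m hm
  exact tb n m hn hm

set_option maxHeartbeats 2000000 in
lemma stepB (G : E →L[ℝ] E) (K : ℝ) (hK : 0 < K) (hGK : ∀ x, ‖x‖ ≤ K * ‖G x‖)
    (s t : ℕ → ℝ) (a b : ℕ → E)
    (hs : ∀ n, 1 ≤ n → 0 < s n) (ht : ∀ n, 1 ≤ n → 0 < t n)
    (ha : ∀ n, 1 ≤ n → ‖a n‖ = 1) (hb : ∀ n, 1 ≤ n → ‖b n‖ = 1)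
    (hab : ∀ n, 1 ≤ n → (G ^ n) (b n) = s n • a n)
    (hle : ∀ n, 1 ≤ n → ∀ x, ‖(G ^ n) x‖ ≤ s n * ‖x‖)
    (hR : ∀ n, 1 ≤ n → ∀ x, ‖(G ^ n) x - (s n * inner ℝ (b n) x) • a n‖ ≤ t n * ‖x‖)
    (hgap : ∀ δ : ℝ, 0 < δ → ∃ N, 1 ≤ N ∧ ∀ n : ℕ, N ≤ n → (n:ℝ)^2 * t n ≤ δ * s n) :
    ∃ (v : E) (c : ℝ) (n : ℕ), ‖v‖ = 1 ∧ G v = c • v ∧ c ≠ 0 ∧ 1 ≤ n ∧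
      s n * t n ≤ |c| ^ (2 * n) / 16 := by
  have hsucc : ∀ n x, (G ^ (n+1)) x = G ((G ^ n) x) := by
    intro n x; rw [pow_succ']; rfl
  have hsucc' : ∀ n x, (G ^ (n+1)) x = (G ^ n) (G x) := by
    intro n x; rw [pow_succ]; rfl
  have hG0 : 0 ≤ ‖G‖ := norm_nonneg G
  have hnb : ∀ n, 1 ≤ n → ‖(G ^ n) (b n)‖ = s n := by
    intro n hn
    rw [hab n hn, norm_smul, ha n hn, mul_one, Real.norm_of_nonneg (hs n hn).le]
  -- comparison of consecutive norms
  have hs1 : ∀ n, 1 ≤ n → s n ≤ K * s (n+1) := by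
    intro n hn
    have h1 := hGK ((G ^ n) (b n))
    rw [hnb n hn, ← hsucc] at h1
    have h2 := hle (n+1) (by omega) (b n)
    rw [hb n hn, mul_one] at h2
    nlinarith
  have hs2 : ∀ n, 1 ≤ n → s (n+1) ≤ ‖G‖ * s n := by
    intro n hn
    have h1 := hnb (n+1) (by omega)
    rw [hsucc] at h1
    have h2 := hle n hn (b (n+1))
    rw [hb (n+1) (by omega), mul_one] at h2
    have h3 := G.le_opNorm ((G^n) (b (n+1)))
    nlinarith
  have hsg : ∀ n, ∃ ε : ℝ, (ε = 1 ∨ ε = -1) ∧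
      (1 ≤ n → ‖a (n+1) - ε • a n‖ ≤ 2 * (K * ‖G‖ * (t n / s n))) := by
    intro n
    by_cases hn : 1 ≤ n
    swap
    · exact ⟨1, Or.inl rfl, fun h => absurd h hn⟩
    have hsn := hs n hn
    have hsn1 := hs (n+1) (by omega)
    have h1 := hR n hn (G (b (n+1)))
    rw [← hsucc', hab (n+1) (by omega)] at h1
    have h2 := G.le_opNorm (b (n+1))
    rw [hb (n+1) (by omega), mul_one] at h2
    set l := s n * inner ℝ (b n) (G (b (n+1))) with hl
    have h3 : s (n+1) • a (n+1) - l • a n = s (n+1) • (a (n+1) - (l / s (n+1)) • a n) := by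
      rw [smul_sub, smul_smul, mul_div_cancel₀ _ hsn1.ne']
    rw [h3, norm_smul, Real.norm_of_nonneg hsn1.le] at h1
    have h4 : ‖a (n+1) - (l / s (n+1)) • a n‖ ≤ K * ‖G‖ * (t n / s n) := by
      have h5 : s (n+1) * ‖a (n+1) - (l / s (n+1)) • a n‖ ≤ t n * ‖G‖ :=
        h1.trans (mul_le_mul_of_nonneg_left h2 (ht n hn).le)
      have h6 : s n * ‖a (n+1) - (l / s (n+1)) • a n‖ ≤ K * (t n * ‖G‖) := by
        calc _ ≤ (K * s (n+1)) * ‖a (n+1) - (l / s (n+1)) • a n‖ :=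
              mul_le_mul_of_nonneg_right (hs1 n hn) (norm_nonneg _)
          _ = K * (s (n+1) * ‖a (n+1) - (l / s (n+1)) • a n‖) := by ring
          _ ≤ _ := mul_le_mul_of_nonneg_left h5 hK.le
      rw [← mul_div_assoc, le_div_iff₀ hsn]
      linarith
    obtain ⟨ε, h5, h6⟩ := sign_fix _ _ (ha (n+1) (by omega)) (ha n hn) _ _ h4
    exact ⟨ε, h5, fun _ => h6⟩
  choose ε hε hstep using hsg
  set σ : ℕ → ℝ := fun n => ∏ i ∈ Finset.range n, ε i with hσ
  have hσ1 : ∀ n, σ n = 1 ∨ σ n = -1 := by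
    intro n
    induction n with
    | zero => left; simp [hσ]
    | succ n ih =>
      have : σ (n+1) = σ n * ε n := by simp [hσ, Finset.prod_range_succ]
      rw [this]
      rcases ih with h | h <;> rcases hε n with h' | h' <;> rw [h, h'] <;> norm_num
  have hσn : ∀ n, ‖σ n‖ = 1 := by
    intro n; rcases hσ1 n with h | h <;> rw [h] <;> simp
  set A : ℕ → E := fun n => σ n • a n with hA
  have hAn : ∀ n, 1 ≤ n → ‖A n‖ = 1 := by
    intro n hn; simp only [hA]; rw [norm_smul, hσn, ha n hn, one_mul]
  have hAstep : ∀ n, 1 ≤ n → ‖A (n+1) - A n‖ ≤ 2 * (K * ‖G‖ * (t n / s n)) := by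
    intro n hn
    have e1 : σ (n+1) = σ n * ε n := by simp [hσ, Finset.prod_range_succ]
    have e3 : ε n * ε n = 1 := by rcases hε n with h | h <;> rw [h] <;> norm_num
    have e2 : A (n+1) - A n = σ (n+1) • (a (n+1) - ε n • a n) := by
      simp only [hA]
      rw [smul_sub, smul_smul, e1, mul_assoc (σ n), e3, mul_one]
    rw [e2, norm_smul, hσn, one_mul]
    exact hstep n hn
  -- choose the constant
  set M := 4 * (K * ‖G‖) with hM
  have hM0 : 0 ≤ M := by positivity
  set δ := 1 / (4 * K * (‖G‖ * (M + 1) + 1)) with hδ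
  have hδ0 : 0 < δ := by positivity
  obtain ⟨N, hN1, hN⟩ := hgap δ hδ0
  have hts : ∀ n : ℕ, N ≤ n → t n / s n ≤ δ / (n:ℝ)^2 := by
    intro n hn
    have hn0 : (0:ℝ) < n := by exact_mod_cast (by omega : 0 < n)
    rw [div_le_div_iff₀ (hs n (by omega)) (by positivity)]
    have := hN n hn
    linarith
  have hAinc : ∀ n, N ≤ n → ‖A (n+1) - A n‖ ≤ (M * δ) * (1 / (n:ℝ) - 1 / ((n:ℝ)+1)) := by
    intro n hn
    have hn0 : (1:ℝ) ≤ n := by exact_mod_cast (by omega : 1 ≤ n)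
    have h1 : 1 / (n:ℝ)^2 ≤ 2 * (1 / (n:ℝ) - 1 / ((n:ℝ)+1)) := by
      have : 2 * (1 / (n:ℝ) - 1 / ((n:ℝ)+1)) = 2 / (n * (n+1)) := by field_simp; ring
      rw [this, div_le_div_iff₀ (by positivity) (by positivity)]
      nlinarith
    calc _ ≤ 2 * (K * ‖G‖ * (t n / s n)) := hAstep n (by omega)
      _ ≤ 2 * (K * ‖G‖ * (δ / (n:ℝ)^2)) := by
          exact mul_le_mul_of_nonneg_left (mul_le_mul_of_nonneg_left (hts n hn) (by positivity)) (by norm_num)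
      _ = 2 * K * ‖G‖ * δ * (1 / (n:ℝ)^2) := by ring
      _ ≤ 2 * K * ‖G‖ * δ * (2 * (1 / (n:ℝ) - 1 / ((n:ℝ)+1))) := by gcongr
      _ = _ := by rw [hM]; ring
  obtain ⟨v, hv, hvt⟩ := limit_exists A N hN1 (M * δ) (by positivity) hAinc
  have hv1 : ‖v‖ = 1 := by
    refine tendsto_nhds_unique hv.norm ?_
    refine tendsto_const_nhds.congr' ?_
    filter_upwards [Filter.eventually_ge_atTop 1] with n hn
    exact (hAn n hn).symm
  -- eigenvector
  have hev : G v - (inner ℝ v (G v) : ℝ) • v = 0 := by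
    have hv2 : Filter.Tendsto (fun n => A (n+1)) Filter.atTop (nhds v) :=
      (Filter.tendsto_add_atTop_iff_nat 1).2 hv
    have hGv : Filter.Tendsto (fun n => G (A n)) Filter.atTop (nhds (G v)) :=
      (G.continuous.tendsto v).comp hv
    have hl : Filter.Tendsto (fun n => ‖G (A n) - (inner ℝ (A (n+1)) (G (A n)) : ℝ) • A (n+1)‖)
        Filter.atTop (nhds ‖G v - (inner ℝ v (G v) : ℝ) • v‖) :=
      (hGv.sub ((hv2.inner hGv).smul hv2)).norm
    have hz : Filter.Tendsto (fun n : ℕ => 2 * (‖G‖ * (δ / ((n + 1 : ℕ):ℝ)))) Filter.atTop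
        (nhds (2 * (‖G‖ * 0))) :=
      (((Filter.tendsto_add_atTop_iff_nat (f := fun i : ℕ => δ / (i:ℝ)) 1).2
        (tendsto_const_div_atTop_nhds_zero_nat δ)).const_mul _).const_mul _
    have : ‖G v - (inner ℝ v (G v) : ℝ) • v‖ ≤ 2 * (‖G‖ * 0) := by
      refine le_of_tendsto_of_tendsto hl hz ?_
      filter_upwards [Filter.eventually_ge_atTop N] with n hn
      have hn1 : 1 ≤ n := by omega
      have hsn := hs n hn1
      have hsn1 := hs (n+1) (by omega)
      have h1 := hR (n+1) (by omega) (b n)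
      rw [hsucc, hab n hn1, hb n hn1, mul_one, map_smul] at h1
      set l := s (n+1) * inner ℝ (b (n+1)) (b n) with hl
      have h2 : ‖G (a n) - (l / s n) • a (n+1)‖ ≤ ‖G‖ * (δ / ((n + 1 : ℕ):ℝ)) := by
        have h3 : s n • G (a n) - l • a (n+1) = s n • (G (a n) - (l / s n) • a (n+1)) := by
          rw [smul_sub, smul_smul, mul_div_cancel₀ _ hsn.ne']
        rw [h3, norm_smul, Real.norm_of_nonneg hsn.le] at h1
        have h4 := hs2 n hn1
        have h5 := hts (n+1) (by omega)
        have hn0 : (1:ℝ) ≤ ((n+1 : ℕ) : ℝ) := by exact_mod_cast (by omega : 1 ≤ n + 1)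
        have h6 : δ / ((n + 1 : ℕ):ℝ)^2 ≤ δ / ((n + 1 : ℕ):ℝ) := by
          gcongr; nlinarith
        have h7 : t (n+1) ≤ (δ / ((n + 1 : ℕ):ℝ)) * s (n+1) := by
          rw [← div_le_iff₀ hsn1]; linarith
        have h8 : 0 ≤ δ / ((n + 1 : ℕ):ℝ) := by positivity
        have h9 : s n * ‖G (a n) - (l / s n) • a (n+1)‖ ≤ s n * (‖G‖ * (δ / ((n + 1 : ℕ):ℝ))) := by
          calc _ ≤ _ := h1
            _ ≤ _ := h7
            _ ≤ (δ / ((n + 1 : ℕ):ℝ)) * (‖G‖ * s n) := mul_le_mul_of_nonneg_left h4 h8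
            _ = _ := by ring
        exact le_of_mul_le_mul_left h9 hsn
      refine proj_bound _ _ (hAn (n+1) (by omega)) (σ n * (l / s n) * σ (n+1)) _ ?_
      have e4 : σ (n+1) * σ (n+1) = 1 := by rcases hσ1 (n+1) with h | h <;> rw [h] <;> norm_num
      have e5 : G (A n) - (σ n * (l / s n) * σ (n+1)) • A (n+1)
          = σ n • (G (a n) - (l / s n) • a (n+1)) := by
        simp only [hA]
        rw [map_smul, smul_sub, smul_smul, smul_smul, mul_assoc _ (σ (n+1)), e4, mul_one]
      rw [e5, norm_smul, hσn, one_mul]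
      exact h2
    rw [mul_zero, mul_zero] at this
    exact norm_le_zero_iff.1 this
  set c : ℝ := inner ℝ v (G v) with hc
  have hGv : G v = c • v := sub_eq_zero.1 hev
  have hcK : 1 ≤ K * |c| := by
    have := hGK v
    rwa [hGv, norm_smul, hv1, mul_one, Real.norm_eq_abs] at this
  have hc0 : 0 < |c| := by
    by_contra h
    have : |c| = 0 := le_antisymm (not_lt.1 h) (abs_nonneg c)
    rw [this] at hcK; linarith
  -- growth
  have hgr : ∀ n : ℕ, N ≤ n → s (n+1) ≤ s n * (|c| * (1 + 1 / (4 * (n:ℝ)))) := by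
    intro n hn
    have hn1 : 1 ≤ n := by omega
    have hn0 : (1:ℝ) ≤ n := by exact_mod_cast hn1
    have hsn := hs n hn1
    have h1 : ‖G (a n)‖ ≤ |c| + ‖G‖ * (M * δ / n) := by
      have h2 : ‖G (a n)‖ = ‖G (A n)‖ := by
        simp only [hA]; rw [map_smul, norm_smul, hσn, one_mul]
      have h3 : G (A n) = G v + G (A n - v) := by rw [map_sub]; abel
      rw [h2, h3]
      refine (norm_add_le _ _).trans ?_
      have h4 : ‖G v‖ = |c| := by rw [hGv, norm_smul, hv1, mul_one, Real.norm_eq_abs]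
      have h5 := (G.le_opNorm (A n - v)).trans (mul_le_mul_of_nonneg_left (hvt n hn) hG0)
      linarith
    have h2 : s (n+1) ≤ s n * ‖G (a n)‖ + ‖G‖ * t n := by
      have h3 := hR n hn1 (b (n+1))
      rw [hb (n+1) (by omega), mul_one] at h3
      rw [← hnb (n+1) (by omega), hsucc]
      set r := (G ^ n) (b (n+1)) - (s n * inner ℝ (b n) (b (n+1))) • a n with hr
      have h4 : (G ^ n) (b (n+1)) = (s n * inner ℝ (b n) (b (n+1))) • a n + r := by
        rw [hr]; abel
      rw [h4, map_add, map_smul]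
      refine (norm_add_le _ _).trans ?_
      have h5 := (G.le_opNorm r).trans (mul_le_mul_of_nonneg_left h3 hG0)
      have h6 : ‖(s n * inner ℝ (b n) (b (n+1))) • G (a n)‖ ≤ s n * ‖G (a n)‖ := by
        rw [norm_smul, norm_mul, Real.norm_of_nonneg hsn.le]
        have := norm_inner_le_norm (𝕜 := ℝ) (b n) (b (n+1))
        rw [hb n hn1, hb (n+1) (by omega), one_mul] at this
        gcongr
        nlinarith
      linarith
    have h3 : t n ≤ s n * (δ / n) := by
      have h5 := hts n hn
      rw [div_le_iff₀ hsn] at h5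
      have h6 : δ / (n:ℝ)^2 ≤ δ / n := by gcongr; nlinarith
      nlinarith
    have h4 : s (n+1) ≤ s n * (|c| + (‖G‖ * (M+1) * δ) / n) := by
      calc _ ≤ _ := h2
        _ ≤ s n * (|c| + ‖G‖ * (M * δ / n)) + ‖G‖ * (s n * (δ / n)) := by gcongr
        _ = _ := by ring
    refine h4.trans (mul_le_mul_of_nonneg_left ?_ hsn.le)
    have h5 : ‖G‖ * (M+1) * δ ≤ |c| / 4 := by
      have h6 : ‖G‖ * (M+1) * δ ≤ 1 / (4 * K) := by
        rw [hδ, mul_one_div, div_le_div_iff₀ (by positivity) (by positivity)]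
        nlinarith
      have h7 : 1 / (4 * K) ≤ |c| / 4 := by
        rw [div_le_div_iff₀ (by positivity) (by positivity)]
        linarith
      linarith
    have h6 : (‖G‖ * (M+1) * δ) / n ≤ (|c| / 4) / n := by gcongr
    have h7 : |c| * (1 + 1 / (4 * (n:ℝ))) = |c| + (|c| / 4) / n := by field_simp
    linarith
  have hNpos : (0:ℝ) < N := by exact_mod_cast hN1
  have hsN := hs N hN1
  set D := s N ^ 2 / (N * |c| ^ (2 * N)) with hD
  have hD0 : 0 < D := by positivity
  have hgr2 : ∀ n : ℕ, N ≤ n → s n ^ 2 ≤ D * n * |c| ^ (2 * n) := by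
    intro n hn
    induction n, hn using Nat.le_induction with
    | base => rw [hD]; apply le_of_eq; field_simp
    | succ n hn ih =>
      have hn0 : (1:ℝ) ≤ n := by exact_mod_cast (by omega : 1 ≤ n)
      have h1 := hgr n hn
      have h2 := hs (n+1) (by omega)
      calc s (n+1) ^ 2 ≤ (s n * (|c| * (1 + 1 / (4 * (n:ℝ))))) ^ 2 := by gcongr
        _ = s n ^ 2 * |c|^2 * (1 + 1 / (4 * (n:ℝ)))^2 := by ring
        _ ≤ (D * n * |c| ^ (2 * n)) * |c|^2 * (((n:ℝ)+1)/n) := by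
          gcongr
          rw [← sub_nonneg]
          have : ((n:ℝ)+1)/n - (1 + 1 / (4 * (n:ℝ)))^2 = (8 * n - 1) / (16 * n^2) := by
            field_simp; ring
          rw [this]
          apply div_nonneg <;> nlinarith
        _ = _ := by
          push_cast
          rw [mul_add 2 n 1, pow_add]
          field_simp
  obtain ⟨N', hN'1, hN'⟩ := hgap (1 / (16 * D)) (by positivity)
  refine ⟨v, c, max N N', hv1, hGv, abs_pos.1 hc0, by omega, ?_⟩
  set n := max N N' with hn
  have hn1 : 1 ≤ n := by omega
  have hn0 : (1:ℝ) ≤ n := by exact_mod_cast hn1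
  have h1 := hN' n (le_max_right _ _)
  have h2 := hgr2 n (le_max_left _ _)
  have h3 := hs n hn1
  have h4 : (n:ℝ)^2 * (s n * t n) ≤ n * (|c| ^ (2 * n) / 16) := by
    calc (n:ℝ)^2 * (s n * t n) = s n * ((n:ℝ)^2 * t n) := by ring
      _ ≤ s n * (1 / (16 * D) * s n) := by gcongr
      _ = 1 / (16 * D) * s n ^ 2 := by ring
      _ ≤ 1 / (16 * D) * (D * n * |c| ^ (2 * n)) := by gcongr
      _ = _ := by field_simp
  have h5 : 0 < s n * t n := mul_pos h3 (ht n hn1)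
  have h6 : (n:ℝ) * (s n * t n) ≤ n * (|c| ^ (2 * n) / 16) := by
    refine le_trans ?_ h4
    exact mul_le_mul_of_nonneg_right (by nlinarith) h5.le
  exact le_of_mul_le_mul_left h6 (by linarith)

end abstract_part

section contraction_part
variable {E : Type*} [NormedAddCommGroup E] [InnerProductSpace ℝ E]

lemma pow_eig (G : E →L[ℝ] E) (v : E) (c : ℝ) (h : G v = c • v) (n : ℕ) :
    (G ^ n) v = c ^ n • v := by
  induction n with
  | zero => simp
  | succ n ih =>
    have : (G ^ (n+1)) v = (G ^ n) (G v) := by rw [pow_succ]; rfl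
    rw [this, h, map_smul, ih, smul_smul, pow_succ, mul_comm]

/-- the orthogonal component to a unit vector -/
noncomputable def perpMap (v : E) : E →ₗ[ℝ] E where
  toFun x := x - (inner ℝ v x : ℝ) • v
  map_add' x y := by rw [inner_add_right, add_smul]; abel
  map_smul' r x := by
    simp only [RingHom.id_apply]
    rw [inner_smul_right, smul_sub, smul_smul]

lemma perpMap_apply (v x : E) : perpMap v x = x - (inner ℝ v x : ℝ) • v := rfl

lemma perpMap_self (v : E) (hv : ‖v‖ = 1) : perpMap v v = 0 := by
  rw [perpMap_apply, real_inner_self_eq_norm_sq, hv]; simp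

lemma perpMap_le (v x : E) (hv : ‖v‖ = 1) : ‖perpMap v x‖ ≤ 2 * ‖x‖ := by
  have := proj_bound v x hv 0 ‖x‖ (by simp)
  exact this

variable [FiniteDimensional ℝ E]

lemma stepC (G : E →L[ℝ] E) (v : E) (c : ℝ) (n : ℕ) (hv : ‖v‖ = 1) (hGv : G v = c • v)
    (hc : c ≠ 0) (hn : 1 ≤ n)
    (hcon : ∀ y, ‖perpMap v ((G ^ n) y)‖ ≤ |c| ^ n / 2 * ‖y‖) :
    ∃ (W : Submodule ℝ E) (ρ C₀ : ℝ), (∀ x ∈ W, G x ∈ W) ∧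
      IsCompl (Submodule.span ℝ {v}) W ∧ 0 ≤ ρ ∧ ρ < |c| ∧ 0 < C₀ ∧
      ∀ x ∈ W, ∀ m : ℕ, ‖(G ^ m) x‖ ≤ C₀ * ρ ^ m * ‖x‖ := by
  have hv0 : v ≠ 0 := by rintro rfl; simp at hv
  have hc0 : 0 < |c| := abs_pos.2 hc
  have hsucc : ∀ n x, (G ^ (n+1)) x = (G ^ n) (G x) := by
    intro n x; rw [pow_succ]; rfl
  have hadd : ∀ m n x, (G ^ (m+n)) x = (G ^ m) ((G ^ n) x) := by
    intro m n x; rw [pow_add]; rfl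
  have hpv := perpMap_self v hv
  have hker : ∀ x, perpMap v x = 0 → x ∈ Submodule.span ℝ {v} := by
    intro x hx
    rw [perpMap_apply, sub_eq_zero] at hx
    rw [hx]
    exact Submodule.smul_mem _ _ (Submodule.mem_span_singleton_self v)
  -- contraction of the orthogonal component
  have hcon' : ∀ y, ‖perpMap v ((G ^ n) y)‖ ≤ |c| ^ n / 2 * ‖perpMap v y‖ := by
    intro y
    have h1 := hcon (perpMap v y)
    have h2 : perpMap v ((G ^ n) (perpMap v y)) = perpMap v ((G ^ n) y) := by
      rw [perpMap_apply v y, map_sub, map_smul, pow_eig G v c hGv, map_sub, map_smul, map_smul, hpv]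
      simp
    rwa [h2] at h1
  set L : E →ₗ[ℝ] E := G.toLinearMap - c • LinearMap.id with hL
  have hLa : ∀ x, L x = G x - c • x := fun x => rfl
  have hLv : L v = 0 := by rw [hLa, hGv, sub_self]
  -- generalized kernel
  have hgk : ∀ w, L w ∈ Submodule.span ℝ {v} → w ∈ Submodule.span ℝ {v} := by
    intro w hw
    obtain ⟨r, hr⟩ := Submodule.mem_span_singleton.1 hw
    have hGw : G w = c • w + r • v := by rw [hr, hLa]; abel
    have hm : ∀ m, perpMap v ((G ^ m) w) = c ^ m • perpMap v w := by
      intro m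
      induction m with
      | zero => simp
      | succ m ih =>
        rw [hsucc, hGw, map_add, map_smul, map_smul, pow_eig G v c hGv, map_add, map_smul,
          map_smul, map_smul, hpv, ih, smul_smul, pow_succ]
        simp [mul_comm]
    apply hker
    have h1 := hcon' w
    rw [hm n, norm_smul, norm_pow, Real.norm_eq_abs] at h1
    have h2 : 0 < |c| ^ n := by positivity
    have h3 : ‖perpMap v w‖ ≤ 0 := by
      by_contra h
      push Not at h
      nlinarith
    exact norm_le_zero_iff.1 h3
  have hkerL : LinearMap.ker L = Submodule.span ℝ {v} := by
    apply le_antisymm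
    · intro w hw
      apply hgk
      rw [LinearMap.mem_ker.1 hw]
      exact Submodule.zero_mem _
    · rw [Submodule.span_singleton_le_iff_mem]
      exact LinearMap.mem_ker.2 hLv
  have hdisj : Disjoint (Submodule.span ℝ {v}) (LinearMap.range L) := by
    rw [Submodule.disjoint_def]
    rintro x hx ⟨w, rfl⟩
    have := hgk w hx
    rw [← hkerL] at this
    exact LinearMap.mem_ker.1 this
  have hcompl : IsCompl (Submodule.span ℝ {v}) (LinearMap.range L) := by
    refine ⟨hdisj, ?_⟩
    rw [codisjoint_iff]
    apply Submodule.eq_top_of_disjoint _ _ _ hdisj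
    rw [← hkerL, add_comm]
    exact (LinearMap.finrank_range_add_finrank_ker L).ge
  -- the antilipschitz constant
  obtain ⟨C, hC0, hC⟩ : ∃ C : ℝ, 0 < C ∧ ∀ x ∈ LinearMap.range L, ‖x‖ ≤ C * ‖perpMap v x‖ := by
    set f := (perpMap v).domRestrict (LinearMap.range L) with hf
    have hfk : LinearMap.ker f = ⊥ := by
      rw [LinearMap.ker_eq_bot']
      rintro ⟨x, hx⟩ h
      have h1 : x = 0 := (Submodule.disjoint_def.1 hdisj) x (hker x h) hx
      exact Subtype.ext h1
    obtain ⟨K, hK, hKf⟩ := f.exists_antilipschitzWith hfk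
    refine ⟨K, hK, fun x hx => ?_⟩
    have := hKf.le_mul_dist ⟨x, hx⟩ 0
    simpa [hf] using this
  -- the rate
  obtain ⟨ρ, hρ0, hρ⟩ : ∃ ρ : ℝ, 0 < ρ ∧ ρ ^ n = |c| ^ n / 2 :=
    ⟨(|c| ^ n / 2) ^ ((n:ℝ)⁻¹), by positivity,
      Real.rpow_inv_natCast_pow (by positivity) (by omega)⟩
  have hρc : ρ < |c| := by
    apply lt_of_pow_lt_pow_left₀ n hc0.le
    rw [hρ]
    have : 0 < |c| ^ n := by positivity
    linarith
  set D := 2 * ∑ i ∈ Finset.range n, ‖G ^ i‖ / ρ ^ i with hD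
  have hD0 : 0 ≤ D := by positivity
  have hmain : ∀ x m, ‖perpMap v ((G ^ m) x)‖ ≤ D * ρ ^ m * ‖x‖ := by
    intro x m
    induction m using Nat.strong_induction_on with
    | _ m ih =>
      rcases lt_or_ge m n with h | h
      · have h1 := perpMap_le v ((G ^ m) x) hv
        have h2 := (G ^ m).le_opNorm x
        have h3 : ‖G ^ m‖ / ρ ^ m ≤ ∑ i ∈ Finset.range n, ‖G ^ i‖ / ρ ^ i :=
          Finset.single_le_sum (f := fun i => ‖G ^ i‖ / ρ ^ i) (fun i _ => by positivity)
            (Finset.mem_range.2 h)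
        have h4 : 2 * ‖G ^ m‖ ≤ D * ρ ^ m := by
          rw [div_le_iff₀ (by positivity)] at h3
          rw [hD]; linarith
        nlinarith [norm_nonneg x]
      · obtain ⟨j, rfl⟩ := Nat.exists_eq_add_of_le h
        rw [hadd]
        have h1 := hcon' ((G ^ j) x)
        have h2 := ih j (by omega)
        rw [← hρ] at h1
        refine h1.trans ?_
        calc _ ≤ ρ ^ n * (D * ρ ^ j * ‖x‖) := by gcongr
          _ = _ := by rw [pow_add]; ring
  have hinv : ∀ x ∈ LinearMap.range L, G x ∈ LinearMap.range L := by
    rintro x ⟨w, rfl⟩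
    exact ⟨G w, by simp only [hLa, map_sub, map_smul]⟩
  have hinvm : ∀ m, ∀ x ∈ LinearMap.range L, (G ^ m) x ∈ LinearMap.range L := by
    intro m
    induction m with
    | zero => intro x hx; simpa using hx
    | succ m ih => intro x hx; rw [hsucc]; exact ih _ (hinv x hx)
  refine ⟨LinearMap.range L, ρ, C * D + 1, hinv, hcompl, hρ0.le, hρc, by positivity, ?_⟩
  intro x hx m
  have h1 := hC _ (hinvm m x hx)
  have h2 := hmain x m
  have h3 : 0 ≤ ρ ^ m * ‖x‖ := by positivity
  calc _ ≤ _ := h1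
    _ ≤ C * (D * ρ ^ m * ‖x‖) := by gcongr
    _ ≤ _ := by nlinarith

/-- from the estimate of step B to the contraction hypothesis of step C -/
lemma stepBC (T : E →L[ℝ] E) (v a b : E) (hv : ‖v‖ = 1) (s t κ : ℝ) (κabs : ℝ) (hκ : |κ| = κabs)
    (hκ0 : 0 < κabs) (ht : 0 < t) (hTv : T v = κ • v) (ha : ‖a‖ = 1) (hb : ‖b‖ = 1)
    (hle : ∀ x, ‖T x‖ ≤ s * ‖x‖)
    (hR : ∀ x, ‖T x - (s * inner ℝ b x) • a‖ ≤ t * ‖x‖)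
    (hst : s * t ≤ κabs ^ 2 / 16) (y : E) :
    ‖perpMap v (T y)‖ ≤ κabs / 2 * ‖y‖ := by
  have hsκ : κabs ≤ s := by
    have := hle v
    rwa [hTv, norm_smul, hv, mul_one, mul_one, Real.norm_eq_abs, hκ] at this
  have hs : 0 < s := by linarith
  have ht1 : t ≤ κabs / 16 := by
    have h1 : κabs * t ≤ κabs * (κabs / 16) := by nlinarith
    exact le_of_mul_le_mul_left h1 hκ0
  set β : ℝ := inner ℝ b v with hβ
  have h1 : 15 / 16 * κabs ≤ s * |β| := by
    have h2 := hR v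
    rw [hv, mul_one] at h2
    have h3 := norm_sub_norm_le (T v) ((s * β) • a)
    rw [norm_smul _ a, ha, mul_one, norm_mul, Real.norm_of_nonneg hs.le, Real.norm_eq_abs, hTv,
      norm_smul, hv, mul_one, Real.norm_eq_abs, hκ] at h3
    rw [hTv] at h2
    linarith
  have hβ0 : 0 < |β| := by
    by_contra h
    have : |β| = 0 := le_antisymm (not_lt.1 h) (abs_nonneg _)
    rw [this] at h1; linarith
  set r : ℝ := inner ℝ b y / β with hr
  have hry : |r| * |β| ≤ ‖y‖ := by
    rw [← abs_mul, hr, div_mul_cancel₀ _ (abs_pos.1 hβ0)]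
    have := norm_inner_le_norm (𝕜 := ℝ) b y
    rwa [hb, one_mul, Real.norm_eq_abs] at this
  have h4 := hR (y - r • v)
  have h5 : (inner ℝ b (y - r • v) : ℝ) = 0 := by
    rw [inner_sub_right, inner_smul_right, ← hβ, hr, div_mul_cancel₀ _ (abs_pos.1 hβ0), sub_self]
  rw [h5, mul_zero, zero_smul, sub_zero] at h4
  have h6 : ‖y - r • v‖ ≤ ‖y‖ + |r| := by
    refine (norm_sub_le _ _).trans ?_
    rw [norm_smul, hv, mul_one, Real.norm_eq_abs]
  have h7 : perpMap v (T y) = perpMap v (T (y - r • v)) := by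
    rw [map_sub T, map_smul T, hTv, map_sub, map_smul, map_smul, perpMap_self v hv]
    simp
  rw [h7]
  refine (perpMap_le v _ hv).trans ?_
  have h8 : t * |r| ≤ κabs / 15 * ‖y‖ := by
    have h9 : 15 / 16 * κabs * (t * |r|) ≤ 15 / 16 * κabs * (κabs / 15 * ‖y‖) := by
      calc _ ≤ s * |β| * (t * |r|) := by gcongr
        _ = (s * t) * (|r| * |β|) := by ring
        _ ≤ (κabs ^ 2 / 16) * ‖y‖ := by gcongr
        _ = _ := by ring
    exact le_of_mul_le_mul_left h9 (by positivity)
  have h9 : t * ‖y - r • v‖ ≤ κabs / 16 * ‖y‖ + κabs / 15 * ‖y‖ := by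
    calc _ ≤ t * (‖y‖ + |r|) := by gcongr
      _ = t * ‖y‖ + t * |r| := by ring
      _ ≤ _ := by gcongr
  have : 0 ≤ κabs * ‖y‖ := by positivity
  nlinarith
end contraction_part

section svd_part

lemma appE_mul {d : ℕ} (M N : Matrix (Fin d) (Fin d) ℝ) (x : EuclideanSpace ℝ (Fin d)) :
    appE (M * N) x = appE M (appE N x) := by
  simp [appE, Matrix.toLpLin_apply]

lemma appE_one {d : ℕ} (x : EuclideanSpace ℝ (Fin d)) :
    appE (1 : Matrix (Fin d) (Fin d) ℝ) x = x := by
  simp [appE, Matrix.toLpLin_apply]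

lemma appE_add {d : ℕ} (M : Matrix (Fin d) (Fin d) ℝ) (x y : EuclideanSpace ℝ (Fin d)) :
    appE M (x + y) = appE M x + appE M y := map_add _ _ _

lemma appE_sub {d : ℕ} (M : Matrix (Fin d) (Fin d) ℝ) (x y : EuclideanSpace ℝ (Fin d)) :
    appE M (x - y) = appE M x - appE M y := map_sub _ _ _

lemma appE_smul {d : ℕ} (M : Matrix (Fin d) (Fin d) ℝ) (r : ℝ) (x : EuclideanSpace ℝ (Fin d)) :
    appE M (r • x) = r • appE M x := map_smul _ _ _

lemma inner_appE {d : ℕ} (M : Matrix (Fin d) (Fin d) ℝ) (x y : EuclideanSpace ℝ (Fin d)) :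
    (inner ℝ (appE M x) y : ℝ) = inner ℝ x (appE Mᵀ y) := by
  simp only [appE, Matrix.toLpLin_apply, EuclideanSpace.inner_eq_star_dotProduct, star_trivial]
  rw [Matrix.dotProduct_mulVec, Matrix.mulVec_transpose, dotProduct_comm]

lemma inner_orth {d : ℕ} (M : Matrix (Fin d) (Fin d) ℝ) (h : Mᵀ * M = 1)
    (x y : EuclideanSpace ℝ (Fin d)) :
    (inner ℝ (appE M x) (appE M y) : ℝ) = inner ℝ x y := by
  rw [inner_appE, ← appE_mul, h, appE_one]

lemma norm_orth {d : ℕ} (M : Matrix (Fin d) (Fin d) ℝ) (h : Mᵀ * M = 1)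
    (x : EuclideanSpace ℝ (Fin d)) : ‖appE M x‖ = ‖x‖ := by
  rw [← sq_eq_sq₀ (norm_nonneg _) (norm_nonneg _), ← real_inner_self_eq_norm_sq,
    ← real_inner_self_eq_norm_sq, inner_orth M h]

lemma appE_diag {d : ℕ} (α : Fin d → ℝ) (x : EuclideanSpace ℝ (Fin d)) (i : Fin d) :
    appE (Matrix.diagonal α) x i = α i * x i := by
  simp [appE, Matrix.toLpLin_apply, Matrix.mulVec_diagonal]

lemma norm_le_coord {d : ℕ} (x y : EuclideanSpace ℝ (Fin d)) (r : ℝ) (hr : 0 ≤ r)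
    (h : ∀ i, |x i| ≤ r * |y i|) : ‖x‖ ≤ r * ‖y‖ := by
  rw [← sq_le_sq₀ (norm_nonneg _) (by positivity), mul_pow, EuclideanSpace.norm_sq_eq,
    EuclideanSpace.norm_sq_eq, Finset.mul_sum]
  apply Finset.sum_le_sum
  intro i _
  rw [← mul_pow, Real.norm_eq_abs, Real.norm_eq_abs]
  exact pow_le_pow_left₀ (abs_nonneg _) (h i) 2

lemma svd_data {d : ℕ} (i0 i1 : Fin d) (hi0 : i0.val = 0) (hi1 : i1.val = 1) (h k k' : Matrix (Fin d) (Fin d) ℝ) (α : Fin d → ℝ)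
    (H : IsSVD h k α k') :
    ∃ a0 a1 b0 b1 : EuclideanSpace ℝ (Fin d), ‖a0‖ = 1 ∧ ‖a1‖ = 1 ∧ ‖b0‖ = 1 ∧ ‖b1‖ = 1 ∧
      inner ℝ a0 a1 = (0:ℝ) ∧ inner ℝ b0 b1 = (0:ℝ) ∧
      appE h b0 = α i0 • a0 ∧ appE h b1 = α i1 • a1 ∧
      (∀ x, ‖appE h x‖ ≤ α i0 * ‖x‖) ∧
      (∀ x, ‖appE h x - (α i0 * inner ℝ b0 x) • a0‖ ≤ α i1 * ‖x‖) := by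
  obtain ⟨hk, hk', hpos, hanti, rfl⟩ := H
  have hkt : kᵀ * k = 1 := mul_eq_one_comm.1 hk
  have hkt' : k'ᵀ * k' = 1 := mul_eq_one_comm.1 hk'
  have hk'' : k'ᵀᵀ * k'ᵀ = 1 := by rw [Matrix.transpose_transpose]; exact hk'
  set e : Fin d → EuclideanSpace ℝ (Fin d) := fun i => EuclideanSpace.single i (1:ℝ) with he
  have hen : ∀ i, ‖e i‖ = 1 := by intro i; simp [he]
  have he01 : (inner ℝ (e i0) (e i1) : ℝ) = 0 := by
    have hne : i0 ≠ i1 := fun h => by rw [h] at hi0; omega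
    simp [he, EuclideanSpace.inner_single_left, hne]
  have hdiag : ∀ i, appE (Matrix.diagonal α) (e i) = α i • e i := by
    intro i
    ext j
    rw [appE_diag]
    by_cases hij : j = i
    · subst hij; simp [he]
    · simp [he, hij]
  have hact : ∀ i, appE (k * Matrix.diagonal α * k') (appE k'ᵀ (e i)) = α i • appE k (e i) := by
    intro i
    rw [appE_mul, appE_mul, ← appE_mul k', hk', appE_one, hdiag, appE_smul]
  refine ⟨appE k (e i0), appE k (e i1), appE k'ᵀ (e i0),
    appE k'ᵀ (e i1), ?_, ?_, ?_, ?_, ?_, ?_, hact _, hact _, ?_, ?_⟩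
  · rw [norm_orth _ hkt, hen]
  · rw [norm_orth _ hkt, hen]
  · rw [norm_orth _ hk'', hen]
  · rw [norm_orth _ hk'', hen]
  · rw [inner_orth _ hkt, he01]
  · rw [inner_orth _ hk'', he01]
  · intro x
    rw [appE_mul, appE_mul, norm_orth _ hkt, ← norm_orth _ hkt' x]
    apply norm_le_coord _ _ _ (hpos _).le
    intro i
    rw [appE_diag, abs_mul, abs_of_pos (hpos i)]
    exact mul_le_mul_of_nonneg_right (hanti (Fin.le_def.2 (by omega))) (abs_nonneg _)
  · intro x
    rw [appE_mul, appE_mul, inner_appE, Matrix.transpose_transpose, ← appE_smul, ← appE_sub,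
      norm_orth _ hkt, ← norm_orth _ hkt' x]
    apply norm_le_coord _ _ _ (hpos _).le
    intro i
    set y := appE k' x with hy
    have h1 : (inner ℝ (e i0) y : ℝ) = y i0 := by
      simp [he, EuclideanSpace.inner_single_left]
    rw [h1, PiLp.sub_apply, appE_diag, PiLp.smul_apply]
    by_cases hi : i = i0
    · rw [hi]
      simp only [he, EuclideanSpace.single_apply, if_true, smul_eq_mul, mul_one, sub_self, abs_zero]
      exact mul_nonneg (hpos _).le (abs_nonneg _)
    · simp only [he, EuclideanSpace.single_apply, if_neg hi, smul_eq_mul, mul_zero, sub_zero]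
      rw [abs_mul, abs_of_pos (hpos i)]
      refine mul_le_mul_of_nonneg_right (hanti (Fin.le_def.2 ?_)) (abs_nonneg _)
      have : i.val ≠ 0 := fun h => hi (Fin.ext (h.trans hi0.symm))
      omega

end svd_part

lemma gap_iff_aux (s t : ℕ → ℝ) (hs : ∀ n, 1 ≤ n → 0 < s n) (ht : ∀ n, 1 ≤ n → 0 < t n)
    (h : Filter.Tendsto (fun n : ℕ => Real.log (s n) - Real.log (t n) - 2 * Real.log n)
      Filter.atTop Filter.atTop) (δ : ℝ) (hδ : 0 < δ) :
    ∃ N, 1 ≤ N ∧ ∀ n : ℕ, N ≤ n → (n:ℝ)^2 * t n ≤ δ * s n := by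
  obtain ⟨N, hN⟩ := Filter.eventually_atTop.1 (h.eventually_ge_atTop (-Real.log δ))
  refine ⟨max N 1, le_max_right _ _, fun n hn => ?_⟩
  have hn1 : 1 ≤ n := (le_max_right _ _).trans hn
  have hn0 : (0:ℝ) < n := by exact_mod_cast hn1
  have h1 := hN n ((le_max_left _ _).trans hn)
  have h2 := hs n hn1
  have h3 := ht n hn1
  rw [← Real.log_le_log_iff (by positivity) (by positivity), Real.log_mul (by positivity) h3.ne',
    Real.log_mul hδ.ne' h2.ne', Real.log_pow]
  push_cast
  linarith

lemma gap_of_exp (s t : ℕ → ℝ) (c ρ C : ℝ) (hρ : 0 < ρ) (hc : ρ < c) (hC : 0 < C)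
    (hs : ∀ n, 1 ≤ n → c ^ n ≤ s n) (ht0 : ∀ n, 1 ≤ n → 0 < t n)
    (ht : ∀ n, 1 ≤ n → t n ≤ C * ρ ^ n) :
    Filter.Tendsto (fun n : ℕ => Real.log (s n) - Real.log (t n) - 2 * Real.log n)
      Filter.atTop Filter.atTop := by
  have hc0 : 0 < c := hρ.trans hc
  set r := Real.log c - Real.log ρ with hr
  have hr0 : 0 < r := sub_pos.2 (Real.log_lt_log hρ hc)
  have h1 : Filter.Tendsto (fun n : ℕ => (r / 2) * (n:ℝ) - Real.log C) Filter.atTop Filter.atTop :=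
    Filter.tendsto_atTop_add_const_right _ _
      (tendsto_natCast_atTop_atTop.const_mul_atTop (half_pos hr0))
  have h2 : ∀ᶠ n : ℕ in Filter.atTop, Real.log n ≤ r / 4 * n := by
    have h3 := (Real.isLittleO_log_id_atTop.bound (by positivity : 0 < r / 4))
    have h4 := tendsto_natCast_atTop_atTop (R := ℝ) |>.eventually h3
    filter_upwards [h4] with n hn
    simp only [id, Real.norm_eq_abs, Nat.abs_cast] at hn
    exact (le_abs_self _).trans hn
  refine Filter.tendsto_atTop_mono' _ ?_ h1
  filter_upwards [h2, Filter.eventually_ge_atTop 1] with n hn hn1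
  have h5 : n * Real.log c ≤ Real.log (s n) := by
    rw [← Real.log_pow]; exact Real.log_le_log (by positivity) (hs n hn1)
  have h6 : Real.log (t n) ≤ Real.log C + n * Real.log ρ := by
    rw [← Real.log_pow, ← Real.log_mul hC.ne' (by positivity)]
    exact Real.log_le_log (ht0 n hn1) (ht n hn1)
  have h7 : (n:ℝ) * r = n * Real.log c - n * Real.log ρ := by rw [hr]; ring
  linarith

lemma second_le {d : ℕ} (h : Matrix (Fin d) (Fin d) ℝ) (a0 a1 b0 b1 : EuclideanSpace ℝ (Fin d))
    (s t R : ℝ) (ht : 0 < t) (hts : t ≤ s)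
    (ha0 : ‖a0‖ = 1) (ha1 : ‖a1‖ = 1) (hb0 : ‖b0‖ = 1) (hb1 : ‖b1‖ = 1)
    (ha : inner ℝ a0 a1 = (0:ℝ)) (hb : inner ℝ b0 b1 = (0:ℝ))
    (h0 : appE h b0 = s • a0) (h1 : appE h b1 = t • a1)
    (v : EuclideanSpace ℝ (Fin d)) (W : Submodule ℝ (EuclideanSpace ℝ (Fin d)))
    (hW : IsCompl (Submodule.span ℝ {v}) W) (hR : ∀ x ∈ W, ‖appE h x‖ ≤ R * ‖x‖) : t ≤ R := by
  have key : ∀ p q : ℝ, (p ≠ 0 ∨ q ≠ 0) → p • b0 + q • b1 ∈ W → t ≤ R := by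
    intro p q hpq hm
    have h2 := hR _ hm
    rw [appE_add, appE_smul, appE_smul, h0, h1] at h2
    have n1 : ‖p • b0 + q • b1‖ ^ 2 = p ^ 2 + q ^ 2 := by
      rw [norm_add_sq_real, inner_smul_left, inner_smul_right, hb, norm_smul, norm_smul, hb0, hb1]
      simp
    have n2 : ‖p • s • a0 + q • t • a1‖ ^ 2 = p ^ 2 * s ^ 2 + q ^ 2 * t ^ 2 := by
      rw [smul_smul, smul_smul, norm_add_sq_real, inner_smul_left, inner_smul_right, ha, norm_smul,
        norm_smul, ha0, ha1]
      simp [mul_pow]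
    have hpos : 0 < p ^ 2 + q ^ 2 := by
      rcases hpq with h | h
      · have := pow_pos (abs_pos.2 h) 2; rw [sq_abs] at this; nlinarith [sq_nonneg q]
      · have := pow_pos (abs_pos.2 h) 2; rw [sq_abs] at this; nlinarith [sq_nonneg p]
    have hxpos : 0 < ‖p • b0 + q • b1‖ := by
      by_contra hh
      have : ‖p • b0 + q • b1‖ = 0 := le_antisymm (not_lt.1 hh) (norm_nonneg _)
      rw [this] at n1; norm_num at n1; linarith
    have h3 : t * ‖p • b0 + q • b1‖ ≤ ‖p • s • a0 + q • t • a1‖ := by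
      rw [← sq_le_sq₀ (by positivity) (norm_nonneg _), mul_pow, n1, n2]
      have : t ^ 2 ≤ s ^ 2 := pow_le_pow_left₀ ht.le hts 2
      nlinarith [sq_nonneg p]
    exact le_of_mul_le_mul_right (h3.trans h2) hxpos
  have dec : ∀ x, ∃ p : ℝ, ∃ w ∈ W, x = p • v + w := by
    intro x
    have hx : x ∈ Submodule.span ℝ {v} ⊔ W := by rw [hW.sup_eq_top]; trivial
    obtain ⟨y, hy, w, hw, rfl⟩ := Submodule.mem_sup.1 hx
    obtain ⟨p, rfl⟩ := Submodule.mem_span_singleton.1 hy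
    exact ⟨p, w, hw, rfl⟩
  obtain ⟨p0, w0, hw0, e0⟩ := dec b0
  obtain ⟨p1, w1, hw1, e1⟩ := dec b1
  by_cases hp : p0 = 0
  · apply key 1 0 (Or.inl one_ne_zero)
    rw [e0, hp]; simpa using hw0
  · apply key p1 (-p0) (Or.inr (neg_ne_zero.2 hp))
    have : p1 • b0 + (-p0) • b1 = p1 • w0 - p0 • w1 := by
      rw [e0, e1]; module
    rw [this]
    exact W.sub_mem (W.smul_mem _ hw0) (W.smul_mem _ hw1)

/-- `g ∈ GL(d,ℝ)` is proximal in `P(ℝ^d)` (there is an eigenline `ℝv` with a dominated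
`g`-invariant complement `W`) if and only if
`log(α(n) 0) − log(α(n) 1) − 2 log n → +∞`, where `α(n)` are the singular values of `gⁿ`. -/
theorem stmt2 (d : ℕ) (hd : 2 ≤ d) (g : Matrix (Fin d) (Fin d) ℝ) (hg : IsUnit g.det)
    (k : ℕ → Matrix (Fin d) (Fin d) ℝ) (α : ℕ → Fin d → ℝ)
    (k' : ℕ → Matrix (Fin d) (Fin d) ℝ)
    (hsvd : ∀ n : ℕ, 1 ≤ n → IsSVD (g ^ n) (k n) (α n) (k' n)) :
    (∃ (v : EuclideanSpace ℝ (Fin d)) (c : ℝ)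
        (W : Submodule ℝ (EuclideanSpace ℝ (Fin d))) (ρ C₀ : ℝ),
      v ≠ 0 ∧ appE g v = c • v ∧ (∀ x ∈ W, appE g x ∈ W) ∧
      IsCompl (Submodule.span ℝ {v}) W ∧
      0 ≤ ρ ∧ ρ < |c| ∧ 0 < C₀ ∧
      ∀ x ∈ W, ∀ n : ℕ, ‖appE (g ^ n) x‖ ≤ C₀ * ρ ^ n * ‖x‖) ↔
    Filter.Tendsto
      (fun n : ℕ => Real.log (α n ⟨0, by omega⟩) - Real.log (α n ⟨1, by omega⟩)
        - 2 * Real.log n)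
      Filter.atTop Filter.atTop := by
  set G : EuclideanSpace ℝ (Fin d) →L[ℝ] EuclideanSpace ℝ (Fin d) :=
    LinearMap.toContinuousLinearMap (Matrix.toEuclideanLin g) with hG
  have hGa : ∀ x, appE g x = G x := fun x => rfl
  have hGn : ∀ n x, appE (g ^ n) x = (G ^ n) x := by
    intro n
    induction n with
    | zero => intro x; rw [pow_zero, appE_one, pow_zero]; rfl
    | succ n ih => intro x; rw [pow_succ, appE_mul, ih, hGa, pow_succ]; rfl
  have hs0 : ∀ n, 1 ≤ n → ∀ i, 0 < α n i := fun n hn => (hsvd n hn).2.2.1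
  have hanti : ∀ n, 1 ≤ n → Antitone (α n) := fun n hn => (hsvd n hn).2.2.2.1
  constructor
  · rintro ⟨v, c, W, ρ, C₀, hv, hgv, hinv, hW, hρ0, hρc, hC₀, hcon⟩
    have h2 : ∀ n, 1 ≤ n → α n ⟨1, by omega⟩ ≤ C₀ * ρ ^ n := by
      intro n hn
      obtain ⟨a0, a1, b0, b1, ha0, ha1, hb0, hb1, ha, hb, h0, h1, hle, hR⟩ :=
        svd_data ⟨0, by omega⟩ ⟨1, by omega⟩ rfl rfl _ _ _ _ (hsvd n hn)
      exact second_le _ a0 a1 b0 b1 _ _ _ (hs0 n hn _)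
        (hanti n hn (Fin.mk_le_of_le_val (Nat.zero_le _))) ha0 ha1 hb0 hb1 ha hb h0 h1 v W hW
        (fun x hx => hcon x hx n)
    have hρ : 0 < ρ := by
      rcases hρ0.eq_or_lt with h | h
      · have h3 := h2 1 le_rfl
        have h4 := hs0 1 le_rfl ⟨1, by omega⟩
        rw [← h] at h3
        norm_num at h3
        linarith
      · exact h
    refine gap_of_exp (fun n => α n ⟨0, by omega⟩) (fun n => α n ⟨1, by omega⟩) |c| ρ C₀ hρ hρc hC₀
      ?_ (fun n hn => hs0 n hn _) h2
    intro n hn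
    obtain ⟨a0, a1, b0, b1, ha0, ha1, hb0, hb1, ha, hb, h0, h1, hle, hR⟩ :=
        svd_data ⟨0, by omega⟩ ⟨1, by omega⟩ rfl rfl _ _ _ _ (hsvd n hn)
    have h3 := hle v
    rw [hGn, pow_eig G v c hgv, norm_smul, norm_pow, Real.norm_eq_abs] at h3
    exact le_of_mul_le_mul_right h3 (norm_pos_iff.2 hv)
  · intro hlim
    have hdata : ∀ n, ∃ a0 b0 : EuclideanSpace ℝ (Fin d), 1 ≤ n → ‖a0‖ = 1 ∧ ‖b0‖ = 1 ∧
      (G ^ n) b0 = α n ⟨0, by omega⟩ • a0 ∧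
      (∀ x, ‖(G ^ n) x‖ ≤ α n ⟨0, by omega⟩ * ‖x‖) ∧
      (∀ x, ‖(G ^ n) x - (α n ⟨0, by omega⟩ * inner ℝ b0 x) • a0‖
        ≤ α n ⟨1, by omega⟩ * ‖x‖) := by
      intro n
      by_cases hn : 1 ≤ n
      · obtain ⟨a0, a1, b0, b1, ha0, ha1, hb0, hb1, ha, hb, h0, h1, hle, hR⟩ :=
          svd_data ⟨0, by omega⟩ ⟨1, by omega⟩ rfl rfl _ _ _ _ (hsvd n hn)
        simp only [hGn] at h0 hle hR
        exact ⟨a0, b0, fun _ => ⟨ha0, hb0, h0, hle, hR⟩⟩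
      · exact ⟨0, 0, fun h => absurd h hn⟩
    choose a b hab using hdata
    obtain ⟨K, hK, hGK⟩ : ∃ K : ℝ, 0 < K ∧ ∀ x, ‖x‖ ≤ K * ‖G x‖ := by
      set H : EuclideanSpace ℝ (Fin d) →L[ℝ] EuclideanSpace ℝ (Fin d) :=
        LinearMap.toContinuousLinearMap (Matrix.toEuclideanLin g⁻¹) with hH
      refine ⟨‖H‖ + 1, by positivity, fun x => ?_⟩
      have h1 : H (G x) = x := by
        change appE g⁻¹ (appE g x) = x
        rw [← appE_mul, Matrix.nonsing_inv_mul g hg, appE_one]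
      have h2 := H.le_opNorm (G x)
      rw [h1] at h2
      nlinarith [norm_nonneg (G x)]
    obtain ⟨v, c, n, hv, hGv, hc, hn, hst⟩ := stepB G K hK hGK
      (fun n => α n ⟨0, by omega⟩) (fun n => α n ⟨1, by omega⟩) a b
      (fun n hn => hs0 n hn _) (fun n hn => hs0 n hn _)
      (fun n hn => (hab n hn).1) (fun n hn => (hab n hn).2.1) (fun n hn => (hab n hn).2.2.1)
      (fun n hn => (hab n hn).2.2.2.1) (fun n hn => (hab n hn).2.2.2.2)
      (gap_iff_aux _ _ (fun n hn => hs0 n hn _) (fun n hn => hs0 n hn _) hlim)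
    have hc0 : 0 < |c| := abs_pos.2 hc
    have hcon : ∀ y, ‖perpMap v ((G ^ n) y)‖ ≤ |c| ^ n / 2 * ‖y‖ := by
      intro y
      obtain ⟨ha, hb, h0, hle, hR⟩ := hab n hn
      refine stepBC (G ^ n) v (a n) (b n) hv _ _ (c ^ n) (|c| ^ n) (abs_pow c n) (by positivity)
        (hs0 n hn _) (pow_eig G v c hGv n) ha hb hle hR ?_ y
      rw [← pow_mul, mul_comm n 2]
      exact hst
    obtain ⟨W, ρ, C₀, hinv, hW, hρ0, hρc, hC₀, hfin⟩ := stepC G v c n hv hGv hc hn hcon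
    refine ⟨v, c, W, ρ, C₀, ?_, hGv, hinv, hW, hρ0, hρc, hC₀, ?_⟩
    · rintro rfl; simp at hv
    · intro x hx m
      rw [hGn]
      exact hfin x hx m
end

section
/- Let d ≥ 2 and let u ∈ GL(d,ℝ) be unipotent, i.e. (u − 1)^d = 0. Then there exists a constant C ≥ 1 such that for every integer n ≥ 1, every singular value decomposition uⁿ = k·diag(α)·k', and every index i ∈ Fin d such that i+1 is also a valid index: α i / α (i+1) ≤ C·n². -/
open Matrix

open Polynomial

/-- forward difference of a polynomial -/
noncomputable def pdiff (P : ℝ[X]) : ℝ[X] := taylor 1 P - P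

lemma pdiff_spec (P : ℝ[X]) (m : ℕ) (h : P.natDegree ≤ m + 1) :
    (pdiff P).natDegree ≤ m ∧ (pdiff P).coeff m = (m + 1) * P.coeff (m + 1) := by
  have key : ∀ k, m ≤ k → (taylor 1 P).coeff k = P.coeff k + (k+1) * P.coeff (k+1) := by
    intro k hk
    rw [taylor_coeff]
    have h1 : (hasseDeriv k P).natDegree < 2 := by
      have := natDegree_hasseDeriv_le P k
      omega
    rw [eval_eq_sum_range' h1]
    simp [Finset.sum_range_succ, hasseDeriv_coeff]
    rw [add_comm 1 k]
    simp
  constructor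
  · rw [natDegree_le_iff_coeff_eq_zero]
    intro N hN
    rw [pdiff, coeff_sub, key N hN.le, coeff_eq_zero_of_natDegree_lt (n := N + 1) (by omega)]
    simp
  · rw [pdiff, coeff_sub, key m le_rfl]; ring

lemma pdiff_eval (P : ℝ[X]) (x : ℝ) : (pdiff P).eval x = P.eval (x + 1) - P.eval x := by
  simp [pdiff, taylor_eval]

/-- the Hankel-type polynomial `P(n) P(n+2) - P(n+1)^2` -/
lemma exists_hankel (P : ℝ[X]) (m : ℕ) (h : P.natDegree = m + 1) :
    ∃ R : ℝ[X], (∀ x, R.eval x = P.eval x * P.eval (x + 1 + 1) - P.eval (x + 1) ^ 2) ∧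
      ((X : ℝ[X]) ^ (2 * m)).degree ≤ R.degree := by
  refine ⟨P * pdiff (pdiff P) - pdiff P * pdiff P, ?_, ?_⟩
  · intro x
    simp only [eval_sub, eval_mul, pdiff_eval]
    ring
  · rw [degree_X_pow]
    apply le_degree_of_ne_zero
    have ha : P.coeff (m + 1) ≠ 0 := by
      rw [← h]
      have : P ≠ 0 := by rintro rfl; simp at h
      simpa using this
    obtain ⟨h1, h2⟩ := pdiff_spec P m h.le
    rw [coeff_sub, two_mul, coeff_mul_add_eq_of_natDegree_le h1 h1, h2]
    rcases m with _ | k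
    · have : pdiff (pdiff P) = 0 := by
        rw [pdiff, natDegree_eq_zero.1 (Nat.le_zero.1 h1) |>.choose_spec.symm]
        simp
      rw [this]
      simpa using ha
    · obtain ⟨h3, h4⟩ := pdiff_spec (pdiff P) k h1
      have : k + 1 + (k + 1) = (k + 1 + 1) + k := by ring
      rw [this, coeff_mul_add_eq_of_natDegree_le h.le h3, h4, h2]
      have : P.coeff (k+1+1) * ((k+1) * (((k+1:ℕ):ℝ)+1) * P.coeff (k+1+1)) - (((k+1:ℕ):ℝ)+1) * P.coeff (k+1+1) * ((((k+1:ℕ):ℝ)+1) * P.coeff (k+1+1)) = - ((k:ℝ)+2) * P.coeff (k+1+1)^2 := by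
        push_cast; ring
      intro h0
      have h5 : - ((k:ℝ)+2) * P.coeff (k+1+1)^2 = 0 := by
        rw [← this, ← h0]; ring
      have : (k:ℝ) + 2 ≠ 0 := by positivity
      exact mul_ne_zero (neg_ne_zero.2 this) (pow_ne_zero 2 ha) h5

lemma entry_bound {ι : Type*} [Fintype ι] [DecidableEq ι] (L Y L' : Matrix ι ι ℝ) (B M : ℝ)
    (hB : 0 ≤ B) (hL : ∀ i j, |L i j| ≤ B) (hL' : ∀ i j, |L' i j| ≤ B) (hY : ∀ i j, |Y i j| ≤ M)
    (i j : ι) :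
    |(L * Y * L') i j| ≤ (Fintype.card ι : ℝ) ^ 2 * B ^ 2 * M := by
  have hM : 0 ≤ M := (abs_nonneg _).trans (hY i i)
  simp only [Matrix.mul_apply, Finset.sum_mul]
  refine (Finset.abs_sum_le_sum_abs _ _).trans ?_
  calc _ ≤ ∑ _x : ι, ∑ _y : ι, B * M * B := by
        refine Finset.sum_le_sum fun x _ => (Finset.abs_sum_le_sum_abs _ _).trans ?_
        refine Finset.sum_le_sum fun y _ => ?_
        rw [abs_mul, abs_mul]
        gcongr
        · exact hL _ _
        · exact hY _ _
        · exact hL' _ _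
    _ = _ := by simp; ring

lemma minor_bound {ι : Type*} [Fintype ι] [DecidableEq ι] (K K' : Matrix ι ι ℝ) (δ : ι → ℝ) (B : ℝ)
    (hB : 0 ≤ B) (hK : ∀ i j, |K i j| ≤ B) (hK' : ∀ i j, |K' i j| ≤ B) (hδ : ∀ i, 0 < δ i)
    (s t : ι) (hs : ∀ r, δ r ≤ δ s) (ht : ∀ r, r ≠ s → δ r ≤ δ t) (i j a b : ι) :
    |(K * diagonal δ * K') i j * (K * diagonal δ * K') a b
      - (K * diagonal δ * K') a j * (K * diagonal δ * K') i b|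
      ≤ (Fintype.card ι : ℝ) ^ 2 * (2 * B ^ 4) * (δ s * δ t) := by
  have e : ∀ i j, (K * diagonal δ * K') i j = ∑ r, K i r * δ r * K' r j := by
    intro i j; rw [Matrix.mul_apply]; simp only [mul_diagonal]
  simp only [e, Finset.sum_mul_sum, ← Finset.sum_sub_distrib]
  refine (Finset.abs_sum_le_sum_abs _ _).trans ?_
  calc _ ≤ ∑ _x : ι, ∑ _y : ι, (2 * B ^ 4) * (δ s * δ t) := by
        refine Finset.sum_le_sum fun x _ => (Finset.abs_sum_le_sum_abs _ _).trans ?_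
        refine Finset.sum_le_sum fun y _ => ?_
        have hst : 0 < δ s * δ t := mul_pos (hδ s) (hδ t)
        by_cases hxy : x = y
        · subst hxy
          rw [show K i x * δ x * K' x j * (K a x * δ x * K' x b) - K a x * δ x * K' x j * (K i x * δ x * K' x b) = 0 by ring]
          simp; positivity
        · have h1 : δ x * δ y ≤ δ s * δ t := by
            by_cases hx : x = s
            · subst hx
              exact mul_le_mul_of_nonneg_left (ht y (Ne.symm hxy)) (hδ x).le
            · rw [mul_comm (δ s)]
              exact mul_le_mul (ht x hx) (hs y) (hδ y).le (hδ t).le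
          rw [show K i x * δ x * K' x j * (K a y * δ y * K' y b) - K a x * δ x * K' x j * (K i y * δ y * K' y b) = (K i x * K' x j * K a y * K' y b - K a x * K' x j * K i y * K' y b) * (δ x * δ y) by ring]
          rw [abs_mul, abs_of_pos (mul_pos (hδ x) (hδ y))]
          refine mul_le_mul ?_ h1 (mul_pos (hδ x) (hδ y)).le (by positivity)
          have q : ∀ p q r w : ℝ, |p| ≤ B → |q| ≤ B → |r| ≤ B → |w| ≤ B → |p * q * r * w| ≤ B^4 := by
            intro p q r w h1 h2 h3 h4
            rw [abs_mul, abs_mul, abs_mul, show B^4 = B*B*B*B by ring]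
            gcongr
          refine (abs_sub _ _).trans ?_
          have := q _ _ _ _ (hK i x) (hK' x j) (hK a y) (hK' y b)
          have := q _ _ _ _ (hK a x) (hK' x j) (hK i y) (hK' y b)
          linarith
    _ = _ := by simp; ring

lemma svd_top_bound {ι : Type*} [Fintype ι] [DecidableEq ι]
    (X K L K' L' : Matrix ι ι ℝ) (δ : ι → ℝ) (B M : ℝ) (hB : 0 ≤ B)
    (hL : ∀ i j, |L i j| ≤ B) (hL' : ∀ i j, |L' i j| ≤ B) (hX : ∀ i j, |X i j| ≤ M)
    (h1 : L * K = 1) (h2 : K' * L' = 1) (h : X = K * diagonal δ * K') (s : ι) :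
    δ s ≤ (Fintype.card ι : ℝ) ^ 2 * B ^ 2 * M := by
  have e : L * X * L' = diagonal δ := by
    rw [h]
    calc _ = (L * K) * diagonal δ * (K' * L') := by simp only [Matrix.mul_assoc]
      _ = _ := by rw [h1, h2]; simp
  have := entry_bound L X L' B M hB hL hL' hX s s
  rw [e] at this
  simpa using (le_abs_self _).trans this

lemma exists_entry_bound {ι : Type*} [Fintype ι] (X : Matrix ι ι ℝ) :
    ∃ M : ℝ, 0 ≤ M ∧ ∀ i j, |X i j| ≤ M := by
  refine ⟨∑ i, ∑ j, |X i j|, by positivity, fun i j => ?_⟩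
  calc |X i j| ≤ ∑ j, |X i j| :=
        Finset.single_le_sum (f := fun j => |X i j|) (fun _ _ => abs_nonneg _) (Finset.mem_univ j)
    _ ≤ _ := Finset.single_le_sum (f := fun i => ∑ j, |X i j|)
        (fun _ _ => by positivity) (Finset.mem_univ i)

/-- bounded decompositions of `X` -/
def BD {ι : Type*} [Fintype ι] [DecidableEq ι] (B : ℝ) (X : Matrix ι ι ℝ) (δ : ι → ℝ)
    (s t : ι) : Prop :=
  (∀ i, 0 < δ i) ∧ (∀ r, δ r ≤ δ s) ∧ (∀ r, r ≠ s → δ r ≤ δ t) ∧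
  ∃ K L K' L' : Matrix ι ι ℝ, (∀ i j, |K i j| ≤ B) ∧ (∀ i j, |L i j| ≤ B) ∧
    (∀ i j, |K' i j| ≤ B) ∧ (∀ i j, |L' i j| ≤ B) ∧ L * K = 1 ∧ K' * L' = 1 ∧
    X = K * diagonal δ * K'

lemma single_bound {ι : Type*} [Fintype ι] [DecidableEq ι] (B : ℝ) (hB : 0 ≤ B)
    (X Y : Matrix ι ι ℝ) (hXY : X * Y = 1) :
    ∃ C : ℝ, 0 ≤ C ∧ ∀ δ s t, BD B X δ s t → δ s ≤ C * δ t := by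
  obtain ⟨M, hM0, hM⟩ := exists_entry_bound X
  obtain ⟨M', hM0', hM'⟩ := exists_entry_bound Y
  refine ⟨((Fintype.card ι : ℝ) ^ 2 * B ^ 2 * M) * ((Fintype.card ι : ℝ) ^ 2 * B ^ 2 * M'),
    by positivity, ?_⟩
  rintro δ s t ⟨hδ, hs, ht, K, L, K', L', hK, hL, hK', hL', h1, h2, h⟩
  have b1 := svd_top_bound X K L K' L' δ B M hB hL hL' hM h1 h2 h s
  have h1' := mul_eq_one_comm.1 h1
  have h2' := mul_eq_one_comm.1 h2
  have hY : Y = L' * diagonal (fun i => (δ i)⁻¹) * L := by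
    have e : X * (L' * diagonal (fun i => (δ i)⁻¹) * L) = 1 := by
      rw [h]
      calc _ = K * (diagonal δ * ((K' * L') * diagonal (fun i => (δ i)⁻¹))) * L := by
            simp only [Matrix.mul_assoc]
        _ = K * L := by
            rw [h2, Matrix.one_mul, diagonal_mul_diagonal]
            have : (fun i => δ i * (δ i)⁻¹) = fun _ => (1:ℝ) := by
              ext i; exact mul_inv_cancel₀ (hδ i).ne'
            rw [this]; simp
        _ = 1 := h1'
    have hYX := mul_eq_one_comm.1 hXY
    calc Y = Y * (X * (L' * diagonal (fun i => (δ i)⁻¹) * L)) := by rw [e, Matrix.mul_one]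
      _ = _ := by rw [← Matrix.mul_assoc, hYX, Matrix.one_mul]
  have b2 := svd_top_bound Y L' K' L K (fun i => (δ i)⁻¹) B M' hB hK' hK hM' h2 h1 hY t
  have hb := mul_le_mul b1 b2 (inv_pos.2 (hδ t)).le (by positivity)
  rwa [← div_eq_mul_inv, div_le_iff₀ (hδ t)] at hb

open Filter Asymptotics in
lemma main_abs {ι : Type*} [Fintype ι] [DecidableEq ι] (B : ℝ) (hB : 0 ≤ B)
    (U V : Matrix ι ι ℝ) (hUV : U * V = 1) (Q : ι → ι → ℝ[X])
    (hQ : ∀ (n : ℕ) i j, (U ^ n) i j = (Q i j).eval (n : ℝ)) :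
    ∃ C : ℝ, 0 ≤ C ∧ ∀ n : ℕ, 1 ≤ n → ∀ δ s t, BD B (U ^ n) δ s t →
      δ s ≤ C * (n : ℝ) ^ 2 * δ t := by
  have hinv : ∀ n, U ^ n * V ^ n = 1 := by
    intro n
    have hc : Commute U V := by
      rw [commute_iff_eq, hUV, mul_eq_one_comm.1 hUV]
    rw [← hc.mul_pow, hUV, one_pow]
  rcases isEmpty_or_nonempty ι with hι | hι
  · exact ⟨0, le_rfl, fun n _ δ s => (hι.false s).elim⟩
  obtain ⟨⟨i₀, j₀⟩, hmax⟩ := Finite.exists_max (fun x : ι × ι => (Q x.1 x.2).natDegree)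
  simp only [Prod.forall] at hmax
  rcases hdeg : (Q i₀ j₀).natDegree with _ | m
  · have hone : ∀ n, U ^ n = 1 := by
      intro n
      rw [← pow_zero U]
      ext i j
      rw [hQ, hQ]
      have : (Q i j).natDegree = 0 := by have := hmax i j; omega
      obtain ⟨c, hc⟩ := natDegree_eq_zero.1 this
      rw [← hc]; simp
    obtain ⟨C, hC0, hC⟩ := single_bound B hB (1 : Matrix ι ι ℝ) 1 (by simp)
    refine ⟨C, hC0, fun n hn δ s t h => ?_⟩
    have hn' : (1:ℝ) ≤ (n:ℝ) ^ 2 := by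
      have : (1:ℝ) ≤ n := by exact_mod_cast hn
      nlinarith
    have := hC δ s t (by rwa [hone] at h)
    have h0 : 0 < δ t := h.1 t
    refine this.trans ?_
    gcongr
    nlinarith
  obtain ⟨R, hR, hRdeg⟩ := exists_hankel (Q i₀ j₀) m hdeg
  have hX : ∀ k : ℕ, ∀ x : ℝ, (X ^ k : ℝ[X]).eval x = x ^ k := by intro k x; simp
  have up : ∀ i j, ∃ c : ℝ, ∀ᶠ n : ℕ in atTop, |(U ^ n) i j| ≤ c * (n:ℝ) ^ (m+1) := by
    intro i j
    have h1 := isBigO_atTop_of_degree_le (Q i j) (X ^ (m+1)) (by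
      rw [degree_X_pow]
      exact degree_le_of_natDegree_le (by have := hmax i j; omega))
    obtain ⟨c, hc⟩ := h1.bound
    refine ⟨c, ?_⟩
    filter_upwards [tendsto_natCast_atTop_atTop.eventually hc] with n hn
    rw [hQ]
    simpa using hn
  choose c hc using up
  have upall : ∀ᶠ n : ℕ in atTop, ∀ i j, |(U ^ n) i j| ≤ (∑ i, ∑ j, |c i j|) * (n:ℝ) ^ (m+1) := by
    simp only [eventually_all]
    intro i j
    filter_upwards [hc i j] with n hn
    refine hn.trans ?_
    gcongr
    calc c i j ≤ |c i j| := le_abs_self _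
      _ ≤ ∑ j, |c i j| :=
        Finset.single_le_sum (f := fun j => |c i j|) (fun _ _ => abs_nonneg _) (Finset.mem_univ j)
      _ ≤ _ := Finset.single_le_sum (f := fun i => ∑ j, |c i j|)
        (fun _ _ => by positivity) (Finset.mem_univ i)
  set c₁ := ∑ i, ∑ j, |c i j| with hc₁
  have hc₁0 : 0 ≤ c₁ := by positivity
  obtain ⟨c₂, hc₂0, hlow⟩ : ∃ c₂ : ℝ, 0 ≤ c₂ ∧ ∀ᶠ n : ℕ in atTop, (n:ℝ) ^ (2*m) ≤ c₂ * |R.eval (n:ℝ)| := by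
    obtain ⟨c, hc0, hc⟩ := (isBigO_atTop_of_degree_le (X ^ (2*m)) R hRdeg).exists_nonneg
    refine ⟨c, hc0, ?_⟩
    filter_upwards [tendsto_natCast_atTop_atTop.eventually hc.bound] with n hn
    simpa using hn
  obtain ⟨MU, hMU0, hMU⟩ := exists_entry_bound U
  set N : ℝ := (Fintype.card ι : ℝ) with hN
  have minor : ∀ n : ℕ, ∀ δ s t, BD B (U ^ n) δ s t →
      |R.eval (n:ℝ)| ≤ N ^ 2 * (MU * MU * (N ^ 2 * (2 * B ^ 4) * (δ s * δ t))) := by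
    rintro n δ s t ⟨hδ, hs, ht, K, L, K', L', hK, hL, hK', hL', h1, h2, h⟩
    have e0 : (Q i₀ j₀).eval (n:ℝ) = (U ^ n) i₀ j₀ := (hQ _ _ _).symm
    have e1 : (Q i₀ j₀).eval ((n:ℝ)+1) = (U ^ (n+1)) i₀ j₀ := by rw [hQ]; push_cast; rfl
    have e2 : (Q i₀ j₀).eval ((n:ℝ)+1+1) = (U ^ (n+1+1)) i₀ j₀ := by rw [hQ]; push_cast; rfl
    have s1 : (U ^ (n+1)) i₀ j₀ = ∑ a, U i₀ a * (U ^ n) a j₀ := by rw [pow_succ', Matrix.mul_apply]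
    have s1' : (U ^ (n+1)) i₀ j₀ = ∑ b, (U ^ n) i₀ b * U b j₀ := by rw [pow_succ, Matrix.mul_apply]
    have s2 : (U ^ (n+1+1)) i₀ j₀ = ∑ a, ∑ b, U i₀ a * ((U ^ n) a b * U b j₀) := by
      rw [pow_succ', Matrix.mul_apply]
      refine Finset.sum_congr rfl fun a _ => ?_
      rw [pow_succ, Matrix.mul_apply, Finset.mul_sum]
    have e : R.eval (n:ℝ) = ∑ a, ∑ b, U i₀ a * U b j₀ *
        ((U ^ n) i₀ j₀ * (U ^ n) a b - (U ^ n) a j₀ * (U ^ n) i₀ b) := by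
      rw [hR, e0, e1, e2, sq]
      nth_rewrite 1 [s1]
      rw [s1', s2, Finset.sum_mul_sum, Finset.mul_sum, ← Finset.sum_sub_distrib]
      refine Finset.sum_congr rfl fun a _ => ?_
      rw [Finset.mul_sum, ← Finset.sum_sub_distrib]
      refine Finset.sum_congr rfl fun b _ => ?_
      ring
    rw [e]
    refine (Finset.abs_sum_le_sum_abs _ _).trans ?_
    calc _ ≤ ∑ _x : ι, ∑ _y : ι, (MU * MU * (N ^ 2 * (2 * B ^ 4) * (δ s * δ t))) := by
          refine Finset.sum_le_sum fun x _ => (Finset.abs_sum_le_sum_abs _ _).trans ?_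
          refine Finset.sum_le_sum fun y _ => ?_
          have := minor_bound K K' δ B hB hK hK' hδ s t hs ht i₀ j₀ x y
          rw [← h] at this
          rw [abs_mul, abs_mul]
          have := hMU i₀ x
          have := hMU y j₀
          gcongr
      _ = _ := by simp [hN]; ring
  obtain ⟨c₃, hc₃0, hev⟩ : ∃ c₃ : ℝ, 0 ≤ c₃ ∧ ∀ᶠ n : ℕ in atTop, ∀ δ s t, BD B (U ^ n) δ s t →
      δ s ≤ c₃ * (n : ℝ) ^ 2 * δ t := by
    refine ⟨(N^2*B^2*c₁)^2 * (c₂ * (N ^ 2 * (MU * MU * (N ^ 2 * (2 * B ^ 4))))), by positivity, ?_⟩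
    filter_upwards [upall, hlow] with n hn1 hn2 δ s t h
    have h3 := minor n δ s t h
    obtain ⟨hδ, hs, ht, K, L, K', L', hK, hL, hK', hL', h1, h2, h⟩ := h
    have h4 := svd_top_bound _ K L K' L' δ B _ hB hL hL' hn1 h1 h2 h s
    have hs0 := hδ s
    have ht0 := hδ t
    refine le_of_mul_le_mul_right ?_ hs0
    calc δ s * δ s ≤ (N ^ 2 * B ^ 2 * (c₁ * (n:ℝ) ^ (m+1))) * (N ^ 2 * B ^ 2 * (c₁ * (n:ℝ) ^ (m+1))) := by
          gcongr
      _ = (N^2*B^2*c₁)^2 * (n:ℝ)^2 * (n:ℝ)^(2*m) := by ring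
      _ ≤ (N^2*B^2*c₁)^2 * (n:ℝ)^2 * (c₂ * (N ^ 2 * (MU * MU * (N ^ 2 * (2 * B ^ 4) * (δ s * δ t))))) := by
          gcongr
          exact hn2.trans (by gcongr)
      _ = _ := by ring
  obtain ⟨n₀, hn₀⟩ := eventually_atTop.1 hev
  choose C hC0 hC using fun n : ℕ => single_bound B hB (U ^ n) (V ^ n) (hinv n)
  refine ⟨c₃ + ∑ n ∈ Finset.range n₀, C n, add_nonneg hc₃0 (Finset.sum_nonneg fun n _ => hC0 n), ?_⟩
  intro n hn δ s t h
  have ht0 := h.1 t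
  have hsum : 0 ≤ ∑ n ∈ Finset.range n₀, C n := Finset.sum_nonneg fun n _ => hC0 n
  have hn' : (1:ℝ) ≤ (n:ℝ) ^ 2 := by
    have : (1:ℝ) ≤ n := by exact_mod_cast hn
    nlinarith
  rcases le_or_gt n₀ n with hnn | hnn
  · refine (hn₀ n hnn δ s t h).trans ?_
    gcongr
    linarith
  · refine (hC n δ s t h).trans ?_
    have : C n ≤ ∑ n ∈ Finset.range n₀, C n :=
      Finset.single_le_sum (fun n _ => hC0 n) (Finset.mem_range.2 hnn)
    gcongr
    nlinarith

lemma poly_pow (d : ℕ) (u : Matrix (Fin d) (Fin d) ℝ) (hu : (u - 1) ^ d = 0) :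
    ∃ q : Fin d → Fin d → ℝ[X], ∀ (n : ℕ) i j, (u ^ n) i j = (q i j).eval (n : ℝ) := by
  refine ⟨fun i j => ∑ k ∈ Finset.range d,
    C (((u - 1) ^ k) i j * ((k.factorial : ℝ))⁻¹) * descPochhammer ℝ k, fun n i j => ?_⟩
  have h1 : u ^ n = ∑ k ∈ Finset.range d, (n.choose k : ℝ) • (u - 1) ^ k := by
    have h2 : u ^ n = ∑ k ∈ Finset.range (n + 1), (n.choose k : ℝ) • (u - 1) ^ k := by
      conv_lhs => rw [show u = (u - 1) + 1 by abel]
      rw [(Commute.one_right (u - 1)).add_pow]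
      refine Finset.sum_congr rfl fun k _ => ?_
      rw [one_pow, mul_one, ← nsmul_eq_mul', Nat.cast_smul_eq_nsmul]
    have hz : ∀ k, d ≤ k → (u - 1) ^ k = 0 := fun k hk => pow_eq_zero_of_le hk hu
    have h3 : ∀ a, ∑ k ∈ Finset.range a, (n.choose k : ℝ) • (u - 1) ^ k
        = ∑ k ∈ Finset.range a with k < d ∧ k < n + 1, (n.choose k : ℝ) • (u - 1) ^ k := by
      intro a
      rw [Finset.sum_filter_of_ne]
      intro k _ hk
      constructor
      · by_contra h
        rw [hz k (by omega)] at hk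
        simp at hk
      · by_contra h
        rw [Nat.choose_eq_zero_of_lt (by omega)] at hk
        simp at hk
    rw [h2, h3, h3 d]
    refine Finset.sum_congr ?_ fun _ _ => rfl
    ext k; simp; try omega
  rw [h1, Matrix.sum_apply, eval_finsetSum]
  refine Finset.sum_congr rfl fun k _ => ?_
  rw [eval_mul, eval_C, descPochhammer_eval_eq_descFactorial, Nat.descFactorial_eq_factorial_mul_choose]
  have : (k.factorial : ℝ) ≠ 0 := by positivity
  simp
  field_simp

open exteriorPower Set.powersetCard in
/-- compound matrix -/
noncomputable def cmpd {d : ℕ} (p : ℕ) (A : Matrix (Fin d) (Fin d) ℝ) :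
    Matrix (Set.powersetCard (Fin d) p) (Set.powersetCard (Fin d) p) ℝ :=
  LinearMap.toMatrix ((Pi.basisFun ℝ (Fin d)).exteriorPower p)
    ((Pi.basisFun ℝ (Fin d)).exteriorPower p) (exteriorPower.map p (Matrix.toLin' A))

lemma cmpd_mul {d : ℕ} (p : ℕ) (A B : Matrix (Fin d) (Fin d) ℝ) :
    cmpd p (A * B) = cmpd p A * cmpd p B := by
  have e : exteriorPower.map p (Matrix.toLin' (A * B)) =
      exteriorPower.map p (Matrix.toLin' A) ∘ₗ exteriorPower.map p (Matrix.toLin' B) := by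
    rw [Matrix.toLin'_mul]
    exact exteriorPower.map_comp (Matrix.toLin' B) (Matrix.toLin' A)
  rw [cmpd, e, LinearMap.toMatrix_comp _ ((Pi.basisFun ℝ (Fin d)).exteriorPower p)]
  rfl

lemma cmpd_one {d : ℕ} (p : ℕ) : cmpd p (1 : Matrix (Fin d) (Fin d) ℝ) = 1 := by
  rw [cmpd, Matrix.toLin'_one, exteriorPower.map_id, LinearMap.toMatrix_id]

lemma cmpd_pow {d : ℕ} (p : ℕ) (A : Matrix (Fin d) (Fin d) ℝ) (n : ℕ) :
    cmpd p (A ^ n) = cmpd p A ^ n := by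
  induction n with
  | zero => simp [cmpd_one]
  | succ n ih => rw [pow_succ, pow_succ, cmpd_mul, ih]

lemma cmpd_apply {d : ℕ} (p : ℕ) (A : Matrix (Fin d) (Fin d) ℝ)
    (s t : Set.powersetCard (Fin d) p) :
    cmpd p A s t = (Matrix.of fun i j => A (Set.powersetCard.ofFinEmbEquiv.symm s j)
      (Set.powersetCard.ofFinEmbEquiv.symm t i)).det := by
  rw [cmpd, LinearMap.toMatrix_apply, exteriorPower.basis_repr_apply, exteriorPower.basis_apply,
    exteriorPower.map_apply_ιMulti_family, exteriorPower.ιMulti_family,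
    exteriorPower.ιMultiDual_apply_ιMulti]
  congr 1
  ext i j
  simp

lemma cmpd_diagonal {d : ℕ} (p : ℕ) (α : Fin d → ℝ) :
    cmpd p (diagonal α) = diagonal (fun s : Set.powersetCard (Fin d) p =>
      ∏ j : Fin p, α (Set.powersetCard.ofFinEmbEquiv.symm s j)) := by
  ext s t
  rw [cmpd, LinearMap.toMatrix_apply, exteriorPower.basis_apply,
    exteriorPower.map_apply_ιMulti_family]
  have : exteriorPower.ιMulti_family ℝ p ((Matrix.toLin' (diagonal α)) ∘ (Pi.basisFun ℝ (Fin d))) t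
      = (∏ j : Fin p, α (Set.powersetCard.ofFinEmbEquiv.symm t j)) •
        exteriorPower.ιMulti_family ℝ p (Pi.basisFun ℝ (Fin d)) t := by
    rw [exteriorPower.ιMulti_family, exteriorPower.ιMulti_family, ← AlternatingMap.map_smul_univ]
    congr 1
    ext i j
    simp [Matrix.mulVec_diagonal, Pi.single_apply]
    split_ifs with hj
    · rw [hj]
    · rfl
  rw [this, map_smul, exteriorPower.basis_repr]
  by_cases h : s = t
  · subst h; simp
  · simp [h]

lemma cmpd_bound {d : ℕ} (p : ℕ) (A : Matrix (Fin d) (Fin d) ℝ) (hA : ∀ i j, |A i j| ≤ 1)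
    (s t : Set.powersetCard (Fin d) p) : |cmpd p A s t| ≤ p.factorial := by
  rw [cmpd_apply]
  have := Matrix.det_le (A := (Matrix.of fun i j => A (Set.powersetCard.ofFinEmbEquiv.symm s j)
      (Set.powersetCard.ofFinEmbEquiv.symm t i))) (abv := AbsoluteValue.abs) (x := (1:ℝ))
      (fun i j => hA _ _)
  simpa using this

lemma orth_bound {d : ℕ} (k : Matrix (Fin d) (Fin d) ℝ) (hk : k * kᵀ = 1) (i j : Fin d) :
    |k i j| ≤ 1 := by
  have h : (k * kᵀ) i i = 1 := by rw [hk]; simp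
  rw [Matrix.mul_apply] at h
  have h2 : k i j * k i j ≤ 1 := by
    rw [← h]
    exact Finset.single_le_sum (f := fun j => k i j * kᵀ j i)
      (fun j _ => mul_self_nonneg (k i j)) (Finset.mem_univ j)
  exact abs_le_one_iff_mul_self_le_one.2 h2

lemma le_emb {d p : ℕ} (f : Fin p ↪o Fin d) : ∀ (m : ℕ) (h : m < p), m ≤ (f ⟨m, h⟩ : ℕ) := by
  intro m
  induction m with
  | zero => intro h; omega
  | succ m ih =>
    intro h
    have h1 := ih (by omega)
    have h2 : f ⟨m, by omega⟩ < f ⟨m + 1, h⟩ := f.strictMono (by simp)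
    have : (f ⟨m, by omega⟩ : ℕ) < (f ⟨m + 1, h⟩ : ℕ) := h2
    omega

lemma emb_gap {d p : ℕ} (f : Fin p ↪o Fin d) : ∀ (e m : ℕ) (h : m + e < p),
    (f ⟨m, by omega⟩ : ℕ) + e ≤ (f ⟨m + e, h⟩ : ℕ) := by
  intro e
  induction e with
  | zero => intro m h; simp
  | succ e ih =>
    intro m h
    have h1 := ih m (by omega)
    have h2 : f ⟨m + e, by omega⟩ < f ⟨m + (e + 1), h⟩ := f.strictMono (by simp)
    have : (f ⟨m + e, by omega⟩ : ℕ) < (f ⟨m + (e + 1), h⟩ : ℕ) := h2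
    omega

lemma fixed_i (d : ℕ) (u : Matrix (Fin d) (Fin d) ℝ) (hu : (u - 1) ^ d = 0)
    (i : Fin d) (h : (i : ℕ) + 1 < d) :
    ∃ C : ℝ, 0 ≤ C ∧ ∀ n : ℕ, 1 ≤ n →
      ∀ (k : Matrix (Fin d) (Fin d) ℝ) (α : Fin d → ℝ) (k' : Matrix (Fin d) (Fin d) ℝ),
        IsSVD (u ^ n) k α k' → α i / α ⟨(i : ℕ) + 1, h⟩ ≤ C * (n : ℝ) ^ 2 := by
  set p := (i : ℕ) + 1 with hp
  obtain ⟨q, hq⟩ := poly_pow d u hu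
  obtain ⟨v, hv⟩ : ∃ v, u * v = 1 := by
    have hn : IsNilpotent (u - 1) := ⟨d, hu⟩
    have : IsUnit u := by simpa using hn.isUnit_add_one
    obtain ⟨v, hv⟩ := this.exists_right_inv
    exact ⟨v, hv⟩
  obtain ⟨C, hC0, hC⟩ := main_abs (p.factorial : ℝ) (by positivity) (cmpd p u) (cmpd p v)
    (by rw [← cmpd_mul, hv, cmpd_one])
    (fun s t => (Matrix.of fun i j => q (Set.powersetCard.ofFinEmbEquiv.symm s j)
      (Set.powersetCard.ofFinEmbEquiv.symm t i)).det)
    (by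
      intro n s t
      rw [← cmpd_pow, cmpd_apply, ← coe_evalRingHom, RingHom.map_det]
      congr 1
      ext a b
      simp [hq])
  refine ⟨C, hC0, ?_⟩
  rintro n hn k α k' ⟨hk, hk', hpos, hanti, hsvd⟩
  have hk2 : kᵀ * k = 1 := mul_eq_one_comm.1 hk
  have hk2' : k'ᵀ * k' = 1 := mul_eq_one_comm.1 hk'
  let f : Fin p ↪o Fin d := OrderEmbedding.ofStrictMono (fun j => ⟨j, by omega⟩)
    (fun a b hab => by simpa using hab)
  let g : Fin p ↪o Fin d := OrderEmbedding.ofStrictMono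
    (fun j => if hj : (j : ℕ) < i then ⟨j, by omega⟩ else ⟨(i : ℕ) + 1, h⟩)
    (fun a b hab => by
      have h1 : (a : ℕ) < b := hab
      have h2 := b.2
      have h3 : (a : ℕ) < i := by omega
      simp only [h3, dite_true]
      split_ifs
      · exact h1
      · exact Nat.lt_succ_of_lt h3)
  have hf : ∀ j, (f j : ℕ) = j := fun _ => rfl
  have hg : ∀ j, g j = if hj : (j : ℕ) < i then ⟨j, by omega⟩ else ⟨(i : ℕ) + 1, h⟩ := fun _ => rfl
  have hprod : ∀ e : Fin p ↪o Fin d, ∏ j, α (e j) =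
      (∏ j : Fin (i : ℕ), α (e (Fin.castSucc j))) * α (e (Fin.last _)) := fun e =>
    Fin.prod_univ_castSucc (n := (i : ℕ)) (fun j => α (e j))
  have hfg : ∏ j : Fin (i : ℕ), α (f (Fin.castSucc j)) = ∏ j : Fin (i : ℕ), α (g (Fin.castSucc j)) := by
    refine Finset.prod_congr rfl fun j _ => ?_
    congr 1
    ext
    rw [hf, hg]
    simp
  have hfl : f (Fin.last _) = i := by ext; rw [hf]; simp
  have hgl : g (Fin.last _) = ⟨(i : ℕ) + 1, h⟩ := by rw [hg]; simp
  have hle : ∀ (e : Fin p ↪o Fin d) j, α (e j) ≤ α (f j) := by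
    intro e j
    apply hanti
    exact le_emb e j j.2
  let E := Set.powersetCard.ofFinEmbEquiv (I := Fin d) (n := p)
  have key := hC n hn (fun s => ∏ j : Fin p, α (E.symm s j)) (E f) (E g) ?_
  · simp only [Equiv.symm_apply_apply] at key
    rw [hprod f, hprod g, hfl, hgl, ← hfg] at key
    have hP : 0 < ∏ j : Fin (i : ℕ), α (f (Fin.castSucc j)) := Finset.prod_pos fun j _ => hpos _
    rw [div_le_iff₀ (hpos _)]
    refine le_of_mul_le_mul_left ?_ hP
    linarith
  · refine ⟨fun s => Finset.prod_pos fun j _ => hpos _, ?_, ?_, cmpd p k, cmpd p kᵀ, cmpd p k',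
      cmpd p k'ᵀ, ?_, ?_, ?_, ?_, ?_, ?_, ?_⟩
    · intro r
      simp only [Equiv.symm_apply_apply]
      exact Finset.prod_le_prod (fun j _ => (hpos _).le) fun j _ => hle _ j
    · intro r hr
      simp only [Equiv.symm_apply_apply]
      rw [hprod, hprod g, ← hfg, hgl]
      have hne : E.symm r ≠ f := by
        intro h0; apply hr; rw [← h0]; simp
      have hlast : (i : ℕ) + 1 ≤ (E.symm r (Fin.last _) : ℕ) := by
        by_contra hcon
        apply hne
        ext j
        have h1 := le_emb (E.symm r) j j.2
        have h2 := emb_gap (E.symm r) ((i : ℕ) - j) j (by omega)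
        have h3 : (⟨(j : ℕ) + ((i : ℕ) - j), by omega⟩ : Fin p) = Fin.last (i : ℕ) := by
          ext; simp; omega
        rw [h3] at h2
        simp only [Fin.eta] at h1 h2
        rw [hf]
        omega
      refine mul_le_mul ?_ (hanti hlast) (hpos _).le (Finset.prod_nonneg fun j _ => (hpos _).le)
      exact Finset.prod_le_prod (fun j _ => (hpos _).le) fun j _ => hle _ _
    · exact cmpd_bound p k (orth_bound k hk)
    · exact cmpd_bound p _ (orth_bound _ (by simpa using hk2))
    · exact cmpd_bound p _ (orth_bound _ hk')
    · exact cmpd_bound p _ (orth_bound _ (by simpa using hk2'))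
    · rw [← cmpd_mul, hk2, cmpd_one]
    · rw [← cmpd_mul, hk', cmpd_one]
    · rw [← cmpd_pow, hsvd, cmpd_mul, cmpd_mul, cmpd_diagonal]

/-- For a unipotent `u ∈ GL(d,ℝ)` there is `C ≥ 1` such that each ratio of consecutive
singular values of `uⁿ` is at most `C · n²`. -/
theorem stmt3 (d : ℕ) (hd : 2 ≤ d) (u : Matrix (Fin d) (Fin d) ℝ)
    (hu : (u - 1) ^ d = 0) :
    ∃ C : ℝ, 1 ≤ C ∧ ∀ n : ℕ, 1 ≤ n →
      ∀ (k : Matrix (Fin d) (Fin d) ℝ) (α : Fin d → ℝ) (k' : Matrix (Fin d) (Fin d) ℝ),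
        IsSVD (u ^ n) k α k' →
        ∀ i : Fin d, ∀ h : (i : ℕ) + 1 < d,
          α i / α ⟨(i : ℕ) + 1, h⟩ ≤ C * (n : ℝ) ^ 2 := by
  have H : ∀ i : Fin d, ∃ C : ℝ, 0 ≤ C ∧ ∀ h : (i : ℕ) + 1 < d, ∀ n : ℕ, 1 ≤ n →
      ∀ (k : Matrix (Fin d) (Fin d) ℝ) (α : Fin d → ℝ) (k' : Matrix (Fin d) (Fin d) ℝ),
        IsSVD (u ^ n) k α k' → α i / α ⟨(i : ℕ) + 1, h⟩ ≤ C * (n : ℝ) ^ 2 := by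
    intro i
    by_cases h : (i : ℕ) + 1 < d
    · obtain ⟨C, h0, hC⟩ := fixed_i d u hu i h
      exact ⟨C, h0, fun _ => hC⟩
    · exact ⟨0, le_rfl, fun h' => absurd h' h⟩
  choose C hC0 hC using H
  refine ⟨1 + ∑ i, C i, le_add_of_nonneg_right (Finset.sum_nonneg fun i _ => hC0 i), ?_⟩
  intro n hn k α k' hs i h
  refine (hC i h n hn k α k' hs).trans ?_
  have : C i ≤ ∑ i, C i := Finset.single_le_sum (fun i _ => hC0 i) (Finset.mem_univ i)
  gcongr
  linarith
end
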